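/- Let μ ≥ 0, 0 < δ < 1, let e ∈ ℝⁿ be a unit vector, and let f be continuous on B_δ ⊂ ℝⁿ with ‖f‖_∞ ≤ 1. If v is a nonnegative viscosity solution of |∇v + e|^μ Δv = f in B_δ, then there exists a constant C > 0 depending only on n and μ such that sup_{B_{δ/2}} v ≤ C ( inf_{B_{δ/2}} v + 2δ ). -/

import Mathlib

open Metric Set Filter
open scoped RealInnerProductSpace Topology

noncomputable section

abbrev E (n : ℕ) : Type := EuclideanSpace ℝ (Fin n)

/-- Laplacian: trace of the second derivative. -/
def lap {n : ℕ} (φ : E n → ℝ) (x : E n) : ℝ :=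
  ∑ i : Fin n, iteratedFDeriv ℝ 2 φ x ![EuclideanSpace.single i 1, EuclideanSpace.single i 1]

def TouchesBelow {n : ℕ} (u φ : E n → ℝ) (x₀ : E n) : Prop :=
  u x₀ = φ x₀ ∧ ∀ᶠ x in 𝓝 x₀, φ x ≤ u x

def TouchesAbove {n : ℕ} (u φ : E n → ℝ) (x₀ : E n) : Prop :=
  u x₀ = φ x₀ ∧ ∀ᶠ x in 𝓝 x₀, u x ≤ φ x

def posSet {n : ℕ} (Ω : Set (E n)) (u : E n → ℝ) : Set (E n) := {x ∈ Ω | 0 < u x}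

def freeBdry {n : ℕ} (Ω : Set (E n)) (u : E n → ℝ) : Set (E n) := frontier (posSet Ω u) ∩ Ω

/-- Viscosity solution of `|∇u|^μ Δu = f` in `Ω⁺(u)`, `|∇u| = Q` on `F(u)`. -/
def ViscSol {n : ℕ} (μ : ℝ) (Ω : Set (E n)) (f Q u : E n → ℝ) : Prop :=
  (∀ φ : E n → ℝ, ContDiff ℝ 2 φ → ∀ x₀ ∈ posSet Ω u,
      (TouchesBelow u φ x₀ → ‖gradient φ x₀‖ ^ μ * lap φ x₀ ≤ f x₀) ∧
      (TouchesAbove u φ x₀ → f x₀ ≤ ‖gradient φ x₀‖ ^ μ * lap φ x₀)) ∧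
  (∀ φ : E n → ℝ, ContDiff ℝ 2 φ → ∀ x₀ ∈ freeBdry Ω u, gradient φ x₀ ≠ 0 →
      (TouchesBelow u (fun x => max (φ x) 0) x₀ → ‖gradient φ x₀‖ ≤ Q x₀) ∧
      (TouchesAbove u (fun x => max (φ x) 0) x₀ → Q x₀ ≤ ‖gradient φ x₀‖))

/-- `S` is a `C^{1,β}` graph in `B`. -/
def IsC1GraphIn {n : ℕ} (β : ℝ) (S B : Set (E n)) : Prop :=
  ∃ ν : E n, ‖ν‖ = 1 ∧
    ∃ g : ((ℝ ∙ ν)ᗮ : Submodule ℝ (E n)) → ℝ,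
      Differentiable ℝ g ∧
      (∃ K : ℝ, ∀ y z : ((ℝ ∙ ν)ᗮ : Submodule ℝ (E n)),
        ‖gradient g y - gradient g z‖ ≤ K * ‖(y : E n) - (z : E n)‖ ^ β) ∧
      S ∩ B = {x ∈ B | ⟪x, ν⟫ = g (Submodule.orthogonalProjectionOnto (ℝ ∙ ν)ᗮ x)}


/-- Viscosity solution of `|∇v + e|^μ Δv = f` in an open set `U`. -/
def ViscSolShift {n : ℕ} (μ : ℝ) (e : E n) (U : Set (E n)) (f v : E n → ℝ) : Prop :=
  ∀ φ : E n → ℝ, ContDiff ℝ 2 φ → ∀ x₀ ∈ U,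
    (TouchesBelow v φ x₀ → ‖gradient φ x₀ + e‖ ^ μ * lap φ x₀ ≤ f x₀) ∧
    (TouchesAbove v φ x₀ → f x₀ ≤ ‖gradient φ x₀ + e‖ ^ μ * lap φ x₀)


theorem hs_hasDerivAt_line {n : ℕ} {φ : E n → ℝ} (hφ : ContDiff ℝ 2 φ) (x w : E n) (t : ℝ) :
    HasDerivAt (fun t : ℝ => φ (x + t • w)) (fderiv ℝ φ (x + t • w) w) t := by
  have h1 : HasFDerivAt φ (fderiv ℝ φ (x + t • w)) (x + t • w) :=
    ((hφ.differentiable (by norm_num)) _).hasFDerivAt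
  have h2 : HasDerivAt (fun t : ℝ => x + t • w) w t := by
    simpa using ((hasDerivAt_id t).smul_const w).const_add x
  exact h1.comp_hasDerivAt t h2

theorem hs_deriv_line {n : ℕ} {φ : E n → ℝ} (hφ : ContDiff ℝ 2 φ) (x w : E n) :
    deriv (fun t : ℝ => φ (x + t • w)) = fun t => fderiv ℝ φ (x + t • w) w := by
  funext t
  exact (hs_hasDerivAt_line hφ x w t).deriv

theorem hs_d2_line {n : ℕ} {φ : E n → ℝ} (hφ : ContDiff ℝ 2 φ) (x w : E n) :
    iteratedFDeriv ℝ 2 φ x ![w, w] = deriv (deriv (fun t : ℝ => φ (x + t • w))) 0 := by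
  rw [hs_deriv_line hφ, iteratedFDeriv_two_apply]
  have hd : Differentiable ℝ (fderiv ℝ φ) :=
    (hφ.fderiv_right (m := 1) (by norm_num)).differentiable (by norm_num)
  have h1 : HasFDerivAt (fderiv ℝ φ) (fderiv ℝ (fderiv ℝ φ) (x + (0:ℝ) • w)) (x + (0:ℝ) • w) :=
    (hd _).hasFDerivAt
  have h2 : HasDerivAt (fun t : ℝ => x + t • w) w 0 := by
    simpa using ((hasDerivAt_id (0:ℝ)).smul_const w).const_add x
  have h3 := h1.comp_hasDerivAt 0 h2
  have h4 := h3.clm_apply (hasDerivAt_const (0:ℝ) w)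
  have h5 := h4.deriv
  simp only [Function.comp_def] at h5
  rw [h5]
  simp

theorem hs_lap_line {n : ℕ} {φ : E n → ℝ} (hφ : ContDiff ℝ 2 φ) (x : E n) :
    lap φ x = ∑ i : Fin n,
      deriv (deriv (fun t : ℝ => φ (x + t • EuclideanSpace.single i (1:ℝ)))) 0 := by
  unfold lap
  exact Finset.sum_congr rfl fun i _ => hs_d2_line hφ x _

theorem hs_lap_eq {n : ℕ} (φ : E n → ℝ) (x : E n) : lap φ x = Laplacian.laplacian φ x := by
  rw [InnerProductSpace.laplacian_eq_iteratedFDeriv_orthonormalBasis φ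
    (EuclideanSpace.basisFun (Fin n) ℝ)]
  simp [lap]

theorem hs_lap_isom {n : ℕ} {φ : E n → ℝ} (hφ : ContDiff ℝ 2 φ) (a : E n) (R : E n ≃ₗᵢ[ℝ] E n)
    (z : E n) : lap (fun z => φ (a + R z)) z = lap φ (a + R z) := by
  have hc : ContDiff ℝ 2 (fun z => φ (a + R z)) :=
    hφ.comp (contDiff_const.add R.contDiff)
  rw [hs_lap_eq φ, InnerProductSpace.laplacian_eq_iteratedFDeriv_orthonormalBasis φ
    ((EuclideanSpace.basisFun (Fin n) ℝ).map R), hs_lap_line hc]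
  refine Finset.sum_congr rfl fun i _ => ?_
  rw [hs_d2_line hφ]
  congr 2
  funext t
  simp [add_assoc]

theorem hs_lap_trans {n : ℕ} {φ : E n → ℝ} (hφ : ContDiff ℝ 2 φ) (a : E n)
    (z : E n) : lap (fun z => φ (a + z)) z = lap φ (a + z) :=
  hs_lap_isom hφ a (LinearIsometryEquiv.refl ℝ (E n)) z

theorem hs_lap_add {n : ℕ} {φ ψ : E n → ℝ} (hφ : ContDiff ℝ 2 φ) (hψ : ContDiff ℝ 2 ψ) (x : E n) :
    lap (fun x => φ x + ψ x) x = lap φ x + lap ψ x := by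
  rw [hs_lap_eq, hs_lap_eq, hs_lap_eq]
  exact ContDiffAt.laplacian_add hφ.contDiffAt hψ.contDiffAt

theorem hs_lap_neg {n : ℕ} (φ : E n → ℝ) (x : E n) :
    lap (fun x => - φ x) x = - lap φ x := by
  rw [hs_lap_eq, hs_lap_eq]
  exact congrFun (InnerProductSpace.laplacian_neg (f := φ)) x

theorem hs_lap_smul {n : ℕ} {φ : E n → ℝ} (hφ : ContDiff ℝ 2 φ) (c : ℝ) (x : E n) :
    lap (fun x => c * φ x) x = c * lap φ x := by
  rw [hs_lap_eq, hs_lap_eq]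
  exact InnerProductSpace.laplacian_smul c hφ.contDiffAt

theorem hs_lap_const {n : ℕ} (c : ℝ) (x : E n) : lap (fun _ : E n => c) x = 0 := by
  rw [hs_lap_eq]
  simp

/-- local max implies nonpositive Laplacian -/
theorem hs_lap_max {n : ℕ} {φ : E n → ℝ} (hφ : ContDiff ℝ 2 φ) (x : E n) (h : IsLocalMax φ x) :
    lap φ x ≤ 0 := by
  rw [hs_lap_line hφ]
  refine Finset.sum_nonpos fun i _ => ?_
  set w : E n := EuclideanSpace.single i (1:ℝ)
  by_contra hpos
  push Not at hpos
  have hcont : Continuous (fun t : ℝ => x + t • w) := by fun_prop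
  have hmax : IsLocalMax (fun t : ℝ => φ (x + t • w)) 0 := by
    have h0 : Tendsto (fun t : ℝ => x + t • w) (𝓝 0) (𝓝 x) := by
      simpa using hcont.tendsto 0
    have := h0.eventually h
    simpa [IsLocalMax, IsMaxFilter] using this
  have hmin := isLocalMin_of_deriv_deriv_pos hpos hmax.deriv_eq_zero
    (hφ.continuous.comp hcont).continuousAt
  have hEq : (fun t : ℝ => φ (x + t • w)) =ᶠ[𝓝 0] fun _ => φ (x + (0:ℝ) • w) := by
    filter_upwards [hmax, hmin] with t h1 h2
    exact le_antisymm h1 h2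
  have := hEq.deriv.deriv_eq
  rw [this] at hpos
  simp at hpos

theorem hs_d2_quad (a b c : ℝ) : deriv (deriv (fun t : ℝ => a + b * t + c * t ^ 2)) 0 = 2 * c := by
  have h2 : deriv (fun t : ℝ => a + b * t + c * t ^ 2) = fun t => b + (2 * c) * t := by
    funext t
    have h : HasDerivAt (fun t : ℝ => a + b * t + c * t ^ 2) (b * 1 + c * (2 * t)) t := by
      have := (((hasDerivAt_id t).const_mul b).const_add a).fun_add
        ((hasDerivAt_pow 2 t).const_mul c)
      simpa using this
    rw [h.deriv]
    ring
  rw [h2]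
  simp

theorem hs_lap_sq {n : ℕ} (c x : E n) : lap (fun x => ‖x - c‖ ^ 2) x = 2 * n := by
  have hc : ContDiff ℝ 2 (fun x : E n => ‖x - c‖ ^ 2) := (contDiff_id.sub contDiff_const).norm_sq ℝ
  rw [hs_lap_line hc]
  have : ∀ i : Fin n, deriv (deriv (fun t : ℝ =>
      ‖x + t • EuclideanSpace.single i (1:ℝ) - c‖ ^ 2)) 0 = 2 := by
    intro i
    have h1 : (fun t : ℝ => ‖x + t • EuclideanSpace.single i (1:ℝ) - c‖ ^ 2)
      = fun t => ‖x - c‖ ^ 2 + 2 * ⟪x - c, EuclideanSpace.single i (1:ℝ)⟫ * t + 1 * t ^ 2 := by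
      funext t
      rw [add_sub_right_comm, norm_add_sq_real, inner_smul_right, norm_smul]
      simp
      ring
    rw [h1, hs_d2_quad]
    ring
  simp [this]
  ring

theorem hs_lap_ridge {n : ℕ} (ν : E n) (a b c : ℝ) (x : E n) :
    lap (fun z => a + b * ⟪ν, z⟫ + c * ⟪ν, z⟫ ^ 2) x = 2 * c * ‖ν‖ ^ 2 := by
  have hc : ContDiff ℝ 2 (fun z : E n => a + b * ⟪ν, z⟫ + c * ⟪ν, z⟫ ^ 2) := by
    have hi : ContDiff ℝ 2 (fun z : E n => ⟪ν, z⟫) := contDiff_const.inner ℝ contDiff_id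
    fun_prop
  rw [hs_lap_line hc]
  have : ∀ i : Fin n, deriv (deriv (fun t : ℝ =>
      a + b * ⟪ν, x + t • EuclideanSpace.single i (1:ℝ)⟫
        + c * ⟪ν, x + t • EuclideanSpace.single i (1:ℝ)⟫ ^ 2)) 0 = 2 * (c * ν i ^ 2) := by
    intro i
    have h1 : (fun t : ℝ => a + b * ⟪ν, x + t • EuclideanSpace.single i (1:ℝ)⟫
        + c * ⟪ν, x + t • EuclideanSpace.single i (1:ℝ)⟫ ^ 2)
      = fun t => (a + b * ⟪ν, x⟫ + c * ⟪ν, x⟫ ^ 2) + (b * ν i + 2 * c * ⟪ν, x⟫ * ν i) * t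
          + (c * ν i ^ 2) * t ^ 2 := by
      funext t
      rw [inner_add_right, inner_smul_right]
      have : ⟪ν, EuclideanSpace.single i (1:ℝ)⟫ = ν i := by
        simp [EuclideanSpace.inner_single_right]
      rw [this]
      ring
    rw [h1, hs_d2_quad]
  rw [Finset.sum_congr rfl (fun i _ => this i), ← Finset.mul_sum, ← Finset.mul_sum,
    EuclideanSpace.norm_sq_eq]
  simp
  ring

theorem hs_max_strict {n : ℕ} {F : E n → ℝ} (hF : ContDiff ℝ 2 F) (a : E n) (ρ c : ℝ)
    (hl : ∀ x ∈ ball a ρ, 0 < lap F x) (hs : ∀ x ∈ sphere a ρ, F x ≤ c) :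
    ∀ x ∈ closedBall a ρ, F x ≤ c := by
  intro x hx
  obtain ⟨m, hm, hmax⟩ := (isCompact_closedBall a ρ).exists_isMaxOn ⟨x, hx⟩ hF.continuous.continuousOn
  have h1 : F x ≤ F m := hmax hx
  by_cases hms : m ∈ sphere a ρ
  · exact h1.trans (hs m hms)
  · have hmb : m ∈ ball a ρ := by
      rw [mem_ball]
      exact lt_of_le_of_ne (mem_closedBall.1 hm) hms
    have hloc : IsLocalMax F m := by
      filter_upwards [isOpen_ball.mem_nhds hmb] with y hy
      exact hmax (ball_subset_closedBall hy)
    exact absurd (hs_lap_max hF m hloc) (not_le.2 (hl m hmb))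

theorem hs_max_weak {n : ℕ} (hn : 0 < n) {F : E n → ℝ} (hF : ContDiff ℝ 2 F) (a : E n) (ρ c : ℝ)
    (hl : ∀ x ∈ ball a ρ, 0 ≤ lap F x) (hs : ∀ x ∈ sphere a ρ, F x ≤ c) :
    ∀ x ∈ closedBall a ρ, F x ≤ c := by
  intro x hx
  have hsq : ContDiff ℝ 2 (fun x : E n => ‖x - a‖ ^ 2) := (contDiff_id.sub contDiff_const).norm_sq ℝ
  have key : ∀ η > 0, F x ≤ c + η * ρ ^ 2 := by
    intro η hη
    have h := hs_max_strict (F := fun x => F x + η * ‖x - a‖ ^ 2)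
      (hF.add (contDiff_const.mul hsq)) a ρ (c + η * ρ ^ 2) ?_ ?_ x hx
    · have : 0 ≤ η * ‖x - a‖ ^ 2 := by positivity
      linarith
    · intro y hy
      rw [hs_lap_add hF (contDiff_const.mul hsq), hs_lap_smul hsq, hs_lap_sq]
      have : 0 < η * (2 * n) := by positivity
      linarith [hl y hy]
    · intro y hy
      have h1 := hs y hy
      rw [mem_sphere, dist_eq_norm] at hy
      simp only [hy]
      linarith
  by_contra hcon
  push Not at hcon
  by_cases hρ : ρ = 0
  · have := key 1 one_pos
    simp [hρ] at this
    linarith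
  · have h2 : 0 < ρ ^ 2 := by positivity
    have := key ((F x - c) / (2 * ρ ^ 2)) (by apply div_pos <;> linarith)
    have h3 : (F x - c) / (2 * ρ ^ 2) * ρ ^ 2 = (F x - c) / 2 := by field_simp
    linarith

def hsEv {n : ℕ} (p : MvPolynomial (Fin n) ℝ) (x : E n) : ℝ := MvPolynomial.eval (fun i => x i) p

theorem hs_ev_contDiff {n : ℕ} (p : MvPolynomial (Fin n) ℝ) : ContDiff ℝ 2 (hsEv p) := by
  have h1 : ContDiff ℝ 2 (fun x : Fin n → ℝ => MvPolynomial.eval x p) := by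
    have := (AnalyticOnNhd.eval_mvPolynomial (𝕜 := ℝ) p)
    exact contDiffOn_univ.1 (this.contDiffOn uniqueDiffOn_univ)
  exact h1.comp (PiLp.contDiff_ofLp (𝕜 := ℝ) (n := 2) (p := 2) (E := fun _ : Fin n => ℝ))

theorem hs_ev_line {n : ℕ} (p : MvPolynomial (Fin n) ℝ) (x : E n) (i : Fin n) (t : ℝ) :
    HasDerivAt (fun t : ℝ => hsEv p (x + t • EuclideanSpace.single i (1:ℝ)))
      (hsEv (MvPolynomial.pderiv i p) (x + t • EuclideanSpace.single i (1:ℝ))) t := by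
  unfold hsEv
  induction p using MvPolynomial.induction_on with
  | C a => simpa using hasDerivAt_const t a
  | add p q hp hq => simpa using hp.fun_add hq
  | mul_X p j hp =>
    have hX : HasDerivAt (fun t : ℝ => x j + t * (if j = i then 1 else 0)) (if j = i then 1 else 0) t := by
      simpa using ((hasDerivAt_id t).mul_const (if j = i then (1:ℝ) else 0)).const_add (x j)
    have := hp.fun_mul hX
    simp only [map_mul, MvPolynomial.eval_X, Derivation.leibniz, MvPolynomial.pderiv_X, smul_eq_mul,
      map_add]
    refine (this.congr_deriv ?_).congr_of_eventuallyEq (Eventually.of_forall fun s => ?_)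
    · simp only [Pi.single_apply]
      split_ifs <;> simp_all <;> ring
    · simp

def hsLapP {n : ℕ} : MvPolynomial (Fin n) ℝ →ₗ[ℝ] MvPolynomial (Fin n) ℝ :=
  ∑ i : Fin n, (MvPolynomial.pderiv i).toLinearMap ∘ₗ (MvPolynomial.pderiv i).toLinearMap

theorem hs_lapP {n : ℕ} (p : MvPolynomial (Fin n) ℝ) (x : E n) :
    lap (hsEv p) x = hsEv (hsLapP p) x := by
  rw [hs_lap_line (hs_ev_contDiff p)]
  have h : ∀ i : Fin n, deriv (deriv (fun t : ℝ => hsEv p (x + t • EuclideanSpace.single i (1:ℝ)))) 0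
      = hsEv (MvPolynomial.pderiv i (MvPolynomial.pderiv i p)) x := by
    intro i
    have h1 : deriv (fun t : ℝ => hsEv p (x + t • EuclideanSpace.single i (1:ℝ))) =
        fun t => hsEv (MvPolynomial.pderiv i p) (x + t • EuclideanSpace.single i (1:ℝ)) := by
      funext t
      exact (hs_ev_line p x i t).deriv
    rw [h1, (hs_ev_line _ x i 0).deriv]
    simp
  rw [Finset.sum_congr rfl (fun i _ => h i)]
  simp [hsLapP, hsEv]

theorem hs_deg_pderiv {n : ℕ} (i : Fin n) (m : ℕ) (p : MvPolynomial (Fin n) ℝ)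
    (hp : p.totalDegree ≤ m + 1) : (MvPolynomial.pderiv i p).totalDegree ≤ m := by
  rw [← MvPolynomial.mem_restrictTotalDegree]
  rw [p.as_sum, map_sum]
  refine Submodule.sum_mem _ fun s hs => ?_
  rw [MvPolynomial.pderiv_monomial]
  by_cases h0 : s i = 0
  · simp [h0]
  rw [MvPolynomial.mem_restrictTotalDegree]
  refine (MvPolynomial.totalDegree_monomial_le _ _).trans ?_
  have h1 : s.degree ≤ m + 1 := by
    have := MvPolynomial.le_totalDegree hs
    exact this.trans hp
  have h2 : Finsupp.single i 1 ≤ s := by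
    rw [Finsupp.single_le_iff]; omega
  have h3 : s.degree = (s - Finsupp.single i 1).degree + 1 := by
    conv_lhs => rw [← tsub_add_cancel_of_le h2]
    rw [map_add]; simp
  have h4 : ((s - Finsupp.single i 1).sum fun _ e => e) = (s - Finsupp.single i 1).degree := rfl
  first | omega | (change (s - Finsupp.single i 1).degree ≤ m; omega)

theorem hs_deg_lapP {n : ℕ} (m : ℕ) (p : MvPolynomial (Fin n) ℝ)
    (hp : p.totalDegree ≤ m + 2) : (hsLapP p).totalDegree ≤ m := by
  rw [← MvPolynomial.mem_restrictTotalDegree]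
  simp only [hsLapP, LinearMap.sum_apply]
  refine Submodule.sum_mem _ fun i _ => ?_
  rw [MvPolynomial.mem_restrictTotalDegree]
  exact hs_deg_pderiv i m _ (hs_deg_pderiv i (m + 1) _ hp)

def hsS {n : ℕ} (a : E n) (ρ : ℝ) : MvPolynomial (Fin n) ℝ :=
  MvPolynomial.C (ρ ^ 2) - ∑ i : Fin n, (MvPolynomial.X i - MvPolynomial.C (a i)) ^ 2

theorem hs_S_ev {n : ℕ} (a : E n) (ρ : ℝ) (x : E n) : hsEv (hsS a ρ) x = ρ ^ 2 - ‖x - a‖ ^ 2 := by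
  simp [hsEv, hsS, EuclideanSpace.norm_sq_eq]

theorem hs_S_deg {n : ℕ} (a : E n) (ρ : ℝ) : (hsS a ρ).totalDegree ≤ 2 := by
  rw [← MvPolynomial.mem_restrictTotalDegree]
  refine Submodule.sub_mem _ (by
      rw [MvPolynomial.mem_restrictTotalDegree, MvPolynomial.totalDegree_C]; omega)
    (Submodule.sum_mem _ fun i _ => ?_)
  rw [MvPolynomial.mem_restrictTotalDegree]
  refine (MvPolynomial.totalDegree_pow _ _).trans ?_
  have : (MvPolynomial.X i - MvPolynomial.C (a i) : MvPolynomial (Fin n) ℝ).totalDegree ≤ 1 := by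
    refine (MvPolynomial.totalDegree_sub _ _).trans ?_
    simp
  omega

/-- solvability: every polynomial is the Laplacian of a polynomial vanishing on the sphere -/
theorem hs_solve {n : ℕ} (hn : 0 < n) (a : E n) {ρ : ℝ} (hρ : 0 < ρ) (g : MvPolynomial (Fin n) ℝ) :
    ∃ q : MvPolynomial (Fin n) ℝ, hsLapP (hsS a ρ * q) = g := by
  set m := g.totalDegree
  let T0 : MvPolynomial (Fin n) ℝ →ₗ[ℝ] MvPolynomial (Fin n) ℝ :=
    hsLapP ∘ₗ LinearMap.mulLeft ℝ (hsS a ρ)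
  have hT0 : ∀ q ∈ MvPolynomial.restrictTotalDegree (Fin n) ℝ m,
      T0 q ∈ MvPolynomial.restrictTotalDegree (Fin n) ℝ m := by
    intro q hq
    rw [MvPolynomial.mem_restrictTotalDegree] at hq ⊢
    refine hs_deg_lapP m _ ?_
    refine (MvPolynomial.totalDegree_mul _ _).trans ?_
    have := hs_S_deg a ρ
    omega
  let T := T0.restrict hT0
  have hinj : Function.Injective T := by
    rw [← LinearMap.ker_eq_bot, LinearMap.ker_eq_bot']
    rintro ⟨q, hq⟩ h
    have hz : hsLapP (hsS a ρ * q) = 0 := congrArg Subtype.val h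
    have hlap : ∀ x, lap (hsEv (hsS a ρ * q)) x = 0 := by
      intro x; rw [hs_lapP, hz]; simp [hsEv]
    have hS : ∀ x ∈ sphere a ρ, hsEv (hsS a ρ * q) x = 0 := by
      intro x hx
      have : hsEv (hsS a ρ * q) x = hsEv (hsS a ρ) x * hsEv q x := by simp [hsEv]
      rw [this, hs_S_ev]
      rw [mem_sphere, dist_eq_norm] at hx
      rw [hx]; ring
    have hle := hs_max_weak hn (hs_ev_contDiff (hsS a ρ * q)) a ρ 0 (fun x _ => (hlap x).ge)
      (fun x hx => (hS x hx).le)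
    have hge := hs_max_weak hn (hs_ev_contDiff (hsS a ρ * q)).neg a ρ 0
      (fun x _ => by rw [hs_lap_neg, hlap]; simp)
      (fun x hx => by simp [hS x hx])
    have hqz : q = 0 := by
      refine MvPolynomial.funext_set (fun i => Set.Icc (a i) (a i + ρ / (2 * n))) (fun i => ?_) ?_
      · apply Set.Icc_infinite
        have : 0 < ρ / (2 * n) := by positivity
        linarith
      · intro y hy
        let x : E n := WithLp.toLp 2 y
        have hxa : ‖x - a‖ ^ 2 < ρ ^ 2 := by
          rw [EuclideanSpace.norm_sq_eq]
          have : ∀ i ∈ Finset.univ, ‖(x - a) i‖ ^ 2 ≤ (ρ / (2 * n)) ^ 2 := by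
            intro i _
            have h1 := hy i (Set.mem_univ i)
            simp only [Set.mem_Icc] at h1
            have h2 : (x - a) i = y i - a i := rfl
            rw [h2, Real.norm_eq_abs, sq_abs]
            nlinarith
          have h2 := Finset.sum_le_sum this
          simp only [Finset.sum_const, Finset.card_univ, Fintype.card_fin, nsmul_eq_mul] at h2
          refine h2.trans_lt ?_
          have h3 : (n:ℝ) * (ρ / (2 * n)) ^ 2 = ρ ^ 2 * (1 / (4 * n)) := by
            field_simp; ring
          rw [h3]
          have h4 : (1:ℝ) ≤ n := by exact_mod_cast hn
          have h5 : 1 / (4 * (n:ℝ)) < 1 := by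
            rw [div_lt_one (by positivity)]; linarith
          nlinarith [sq_pos_of_pos hρ]
        have hxb : x ∈ closedBall a ρ := by
          rw [mem_closedBall, dist_eq_norm]
          exact le_of_abs_le (abs_le_of_sq_le_sq (by linarith) hρ.le)
        have h1 := hle x hxb
        have h2 := hge x hxb
        have h3 : hsEv (hsS a ρ * q) x = hsEv (hsS a ρ) x * hsEv q x := by simp [hsEv]
        have h4 : hsEv (hsS a ρ) x * hsEv q x = 0 := by
          rw [← h3]; linarith
        rw [hs_S_ev] at h4
        rcases mul_eq_zero.1 h4 with h5 | h5
        · linarith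
        · rw [map_zero]; exact h5
    exact Subtype.ext hqz
  obtain ⟨q, hq⟩ := (LinearMap.injective_iff_surjective.1 hinj)
    ⟨g, by rw [MvPolynomial.mem_restrictTotalDegree]⟩
  exact ⟨q.1, congrArg Subtype.val hq⟩

theorem hs_approx {n : ℕ} (hn : 0 < n) (a : E n) {ρ : ℝ} (hρ : 0 < ρ) (g : E n → ℝ)
    (hg : ContinuousOn g (sphere a ρ)) (c : ℝ) {ε : ℝ} (hε : 0 < ε) :
    ∃ H : E n → ℝ, ContDiff ℝ 2 H ∧ (∀ x, lap H x = c) ∧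
      ∀ x ∈ sphere a ρ, g x ≤ H x ∧ H x ≤ g x + ε := by
  have : CompactSpace (sphere a ρ) := isCompact_iff_compactSpace.1 (isCompact_sphere a ρ)
  let co : Fin n → C(sphere a ρ, ℝ) := fun i => ⟨fun x => (x : E n) i, by fun_prop⟩
  let A : Subalgebra ℝ C(sphere a ρ, ℝ) := (MvPolynomial.aeval co).range
  have hsep : A.SeparatesPoints := by
    intro x y hxy
    have : ∃ i, (x : E n) i ≠ (y : E n) i := by
      by_contra hcon
      push Not at hcon
      exact hxy (Subtype.ext (by ext i; exact hcon i))
    obtain ⟨i, hi⟩ := this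
    refine ⟨co i, ⟨co i, ?_, rfl⟩, hi⟩
    exact ⟨MvPolynomial.X i, by simp⟩
  let G : C(sphere a ρ, ℝ) := ⟨fun x => g x + ε / 2, by
    have := hg.domRestrict
    exact this.add continuous_const⟩
  obtain ⟨⟨f, p, hp⟩, hf⟩ := ContinuousMap.exists_mem_subalgebra_near_continuousMap_of_separatesPoints
    A hsep G (ε / 2) (by positivity)
  have hfp : ∀ x : sphere a ρ, f x = hsEv p x := by
    intro x
    rw [← hp]
    let ev : C(sphere a ρ, ℝ) →ₐ[ℝ] ℝ := ContinuousMap.evalAlgHom ℝ ℝ x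
    have h1 : ev (MvPolynomial.aeval co p) = MvPolynomial.aeval (fun i => ev (co i)) p :=
      MvPolynomial.comp_aeval_apply _ _ _
    exact h1
  obtain ⟨q, hq⟩ := hs_solve hn a hρ (MvPolynomial.C c - hsLapP p)
  refine ⟨hsEv (p + hsS a ρ * q), hs_ev_contDiff _, fun x => ?_, fun x hx => ?_⟩
  · rw [hs_lapP, map_add, hq]
    simp [hsEv]
  · have h1 : hsEv (p + hsS a ρ * q) x = hsEv p x + hsEv (hsS a ρ) x * hsEv q x := by simp [hsEv]
    have h2 := hx
    rw [mem_sphere, dist_eq_norm] at h2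
    rw [h1, hs_S_ev, h2]
    have h3 := (ContinuousMap.norm_coe_le_norm (f - G) ⟨x, hx⟩).trans_lt hf
    have h4 : (f - G) ⟨x, hx⟩ = hsEv p x - (g x + ε / 2) := by
      rw [ContinuousMap.sub_apply, hfp]; rfl
    rw [h4, Real.norm_eq_abs, abs_lt] at h3
    constructor <;> nlinarith

def HsSub {n : ℕ} (Ω : Set (E n)) (u : E n → ℝ) : Prop :=
  ∀ φ : E n → ℝ, ContDiff ℝ 2 φ → ∀ x ∈ Ω, TouchesAbove u φ x → 2 ≤ ‖gradient φ x‖ → -1 ≤ lap φ x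

theorem hs_norm_grad {n : ℕ} (φ : E n → ℝ) (x : E n) : ‖gradient φ x‖ = ‖fderiv ℝ φ x‖ := by
  simp [gradient]

/-- `U` is the sup-convolution of `u` over `K`. -/
structure HsConv {n : ℕ} (K : Set (E n)) (κ : ℝ) (u U : E n → ℝ) : Prop where
  cont : Continuous U
  le : ∀ x, ∀ z ∈ K, u z - κ * ‖x - z‖ ^ 2 ≤ U x
  ex : ∀ x, ∃ z ∈ K, U x = u z - κ * ‖x - z‖ ^ 2

theorem hs_conv_exists {n : ℕ} {K : Set (E n)} (hK : IsCompact K) (hne : K.Nonempty) (κ : ℝ)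
    {u : E n → ℝ} (hu : Continuous u) : ∃ U, HsConv K κ u U := by
  have hc : Continuous (fun p : E n × E n => u p.2 - κ * ‖p.1 - p.2‖ ^ 2) := by fun_prop
  have hcx : ∀ x, Continuous (fun z : E n => u z - κ * ‖x - z‖ ^ 2) := by intro x; fun_prop
  refine ⟨fun x => sSup ((fun z => u z - κ * ‖x - z‖ ^ 2) '' K), ?_, ?_, ?_⟩
  · exact hK.continuous_sSup hc
  · intro x z hz
    exact le_csSup (hK.image (hcx x)).bddAbove (mem_image_of_mem _ hz)
  · intro x
    obtain ⟨z, hz, h1, -⟩ := hK.exists_sSup_image_eq_and_ge hne (hcx x).continuousOn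
    exact ⟨z, hz, h1⟩

theorem hs_gap {n : ℕ} {K : Set (E n)} (hK : IsCompact K) {κ : ℝ} {u U : E n → ℝ}
    (hu : Continuous u) (hU : HsConv K κ u U) (x0 : E n)
    (h0 : ∀ z ∈ K, U x0 = u z - κ * ‖x0 - z‖ ^ 2 → z ∈ interior K ∧ 1 < κ * ‖x0 - z‖) :
    ∃ ρ > 0, ∀ x ∈ ball x0 ρ, ∀ z ∈ K, U x = u z - κ * ‖x - z‖ ^ 2 →
      z ∈ interior K ∧ 1 ≤ κ * ‖x - z‖ := by
  have hUc := hU.cont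
  have key : ∀ᶠ x in 𝓝 x0, ∀ z ∈ K, U x = u z - κ * ‖x - z‖ ^ 2 →
      z ∈ interior K ∧ 1 ≤ κ * ‖x - z‖ := by
    refine hK.eventually_forall_of_forall_eventually fun z hz => ?_
    by_cases hzz : U x0 = u z - κ * ‖x0 - z‖ ^ 2
    · obtain ⟨h1, h2⟩ := h0 z hz hzz
      have e1 : ∀ᶠ p : E n × E n in 𝓝 (x0, z), p.2 ∈ interior K :=
        continuous_snd.continuousAt.eventually (isOpen_interior.mem_nhds h1)
      have hc : Continuous (fun p : E n × E n => κ * ‖p.1 - p.2‖) := by fun_prop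
      have e2 : ∀ᶠ p : E n × E n in 𝓝 (x0, z), 1 < κ * ‖p.1 - p.2‖ :=
        hc.continuousAt.eventually (lt_mem_nhds h2)
      filter_upwards [e1, e2] with p hp1 hp2 _
      exact ⟨hp1, hp2.le⟩
    · have hc : Continuous (fun p : E n × E n => U p.1 - (u p.2 - κ * ‖p.1 - p.2‖ ^ 2)) := by
        fun_prop
      have e2 : ∀ᶠ p : E n × E n in 𝓝 (x0, z), U p.1 - (u p.2 - κ * ‖p.1 - p.2‖ ^ 2) ≠ 0 :=
        hc.continuousAt.eventually (isOpen_ne.mem_nhds (sub_ne_zero.2 hzz))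
      filter_upwards [e2] with p hp1 hp2
      exact absurd (sub_eq_zero.2 hp2) hp1
  obtain ⟨ρ, hρ, h⟩ := Metric.eventually_nhds_iff_ball.1 key
  exact ⟨ρ, hρ, h⟩

theorem hs_cmp {n : ℕ} {K : Set (E n)} {κ : ℝ} {u U : E n → ℝ} (hU : HsConv K κ u U)
    (hsub : HsSub (interior K) u) (x0 : E n) (ρ : ℝ)
    (hG : ∀ x ∈ ball x0 ρ, ∀ z ∈ K, U x = u z - κ * ‖x - z‖ ^ 2 →
      z ∈ interior K ∧ 1 ≤ κ * ‖x - z‖)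
    {H : E n → ℝ} (hH : ContDiff ℝ 2 H) (hl : ∀ x, lap H x < -1)
    (hs : ∀ x ∈ sphere x0 ρ, U x ≤ H x) : ∀ x ∈ closedBall x0 ρ, U x ≤ H x := by
  intro x hx
  obtain ⟨m, hm, hmax⟩ := (isCompact_closedBall x0 ρ).exists_isMaxOn ⟨x, hx⟩
    (hU.cont.sub hH.continuous).continuousOn
  have h1 : U x - H x ≤ U m - H m := hmax hx
  by_cases hms : m ∈ sphere x0 ρ
  · linarith [hs m hms]
  exfalso
  have hmb : m ∈ ball x0 ρ := by
    rw [mem_ball]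
    exact lt_of_le_of_ne (mem_closedBall.1 hm) hms
  obtain ⟨z, hz, hUz⟩ := hU.ex m
  obtain ⟨hzi, hzk⟩ := hG m hmb z hz hUz
  -- test function
  let φ : E n → ℝ := fun y => H ((m - z) + y) + (u z - H m)
  have hHt : ContDiff ℝ 2 (fun y => H ((m - z) + y)) := hH.comp (contDiff_const.add contDiff_id)
  have hφ : ContDiff ℝ 2 φ := hHt.add contDiff_const
  have htouch : TouchesAbove u φ z := by
    constructor
    · simp [φ]
    · have e1 : ∀ᶠ y in 𝓝 z, y ∈ K := mem_interior_iff_mem_nhds.1 hzi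
      have hc : Continuous (fun y : E n => (m - z) + y) := by fun_prop
      have e2 : ∀ᶠ y in 𝓝 z, (m - z) + y ∈ ball x0 ρ := by
        apply hc.continuousAt.eventually
        apply isOpen_ball.mem_nhds
        simpa using hmb
      filter_upwards [e1, e2] with y hy1 hy2
      have h2 := hU.le ((m - z) + y) y hy1
      have h3 : U ((m - z) + y) - H ((m - z) + y) ≤ U m - H m := hmax (ball_subset_closedBall hy2)
      have h4 : (m - z) + y - y = m - z := by abel
      rw [h4] at h2
      simp only [φ]
      linarith
  have hfd : fderiv ℝ φ z = fderiv ℝ H m := by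
    simp only [φ]
    rw [fderiv_add_const, fderiv_comp_add_left]
    simp
  -- gradient
  set w := m - z with hw
  have hder := hs_hasDerivAt_line hH m w 0
  have hq : HasDerivAt (fun t : ℝ => κ * ((1 + t) ^ 2 * ‖w‖ ^ 2)) (κ * (2 * ‖w‖ ^ 2)) 0 := by
    have : HasDerivAt (fun t : ℝ => (1 + t) ^ 2) (2 * (1 + 0)) 0 := by
      simpa using ((hasDerivAt_id (0:ℝ)).const_add 1).fun_pow 2
    simpa using (this.mul_const (‖w‖ ^ 2)).const_mul κ
  have hsum := hder.fun_add hq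
  have hmin : IsLocalMin (fun t : ℝ => H (m + t • w) + κ * ((1 + t) ^ 2 * ‖w‖ ^ 2)) 0 := by
    have hc : Continuous (fun t : ℝ => m + t • w) := by fun_prop
    have e2 : ∀ᶠ t in 𝓝 (0:ℝ), m + t • w ∈ ball x0 ρ := by
      apply hc.continuousAt.eventually
      apply isOpen_ball.mem_nhds
      simpa using hmb
    filter_upwards [e2] with t ht
    have h3 : U (m + t • w) - H (m + t • w) ≤ U m - H m := hmax (ball_subset_closedBall ht)
    have h2 := hU.le (m + t • w) z hz
    have h4 : m + t • w - z = (1 + t) • w := by rw [hw]; module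
    rw [h4, norm_smul, mul_pow, Real.norm_eq_abs, sq_abs] at h2
    simp only [zero_smul, add_zero, one_pow, one_mul]
    linarith
  have hzero := hmin.hasDerivAt_eq_zero hsum
  simp only [zero_smul, add_zero] at hzero
  have hle : |fderiv ℝ H m w| ≤ ‖fderiv ℝ H m‖ * ‖w‖ := by
    simpa using (fderiv ℝ H m).le_opNorm w
  have hwpos : 0 < ‖w‖ := by
    rcases (norm_nonneg w).lt_or_eq with h | h
    · exact h
    · rw [← h] at hzk; norm_num at hzk
  have hge : 2 ≤ ‖fderiv ℝ H m‖ := by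
    have h5 := neg_abs_le (fderiv ℝ H m w)
    have h6 : 2 * ‖w‖ ≤ ‖fderiv ℝ H m‖ * ‖w‖ := by nlinarith
    exact le_of_mul_le_mul_right h6 hwpos
  have hfin := hsub φ hφ z hzi htouch (by rw [hs_norm_grad, hfd]; exact hge)
  have hlp : lap φ z = lap H m := by
    have h7 := hs_lap_add hHt (contDiff_const (c := u z - H m)) z
    rw [hs_lap_const, hs_lap_trans hH] at h7
    have h8 : w + z = m := by rw [hw]; abel
    rw [h8, add_zero] at h7
    exact h7
  rw [hlp] at hfin
  linarith [hl m]

theorem hs_double {n : ℕ} (hn : 0 < n) {K : Set (E n)} {κ : ℝ} {u1 U1 u2 U2 : E n → ℝ}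
    (hU1 : HsConv K κ u1 U1) (hU2 : HsConv K κ u2 U2)
    (hsub1 : HsSub (interior K) u1) (hsub2 : HsSub (interior K) u2) (x0 y0 : E n) {ρ : ℝ} (hρ : 0 < ρ)
    (hG1 : ∀ x ∈ ball x0 ρ, ∀ z ∈ K, U1 x = u1 z - κ * ‖x - z‖ ^ 2 →
      z ∈ interior K ∧ 1 ≤ κ * ‖x - z‖)
    (hG2 : ∀ x ∈ ball y0 ρ, ∀ z ∈ K, U2 x = u2 z - κ * ‖x - z‖ ^ 2 →
      z ∈ interior K ∧ 1 ≤ κ * ‖x - z‖)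
    (R : E n ≃ₗᵢ[ℝ] E n) {Ψ : E n → ℝ} (hΨ : ContDiff ℝ 2 Ψ) (hlΨ : ∀ z, lap Ψ z ≤ -3)
    (hΨ0 : Ψ 0 = 0)
    (hmax : ∀ z ∈ closedBall (0 : E n) ρ, U1 (x0 + z) + U2 (y0 + R z) ≤ U1 x0 + U2 y0 + Ψ z) :
    False := by
  have hn' : (0:ℝ) < n := by exact_mod_cast hn
  have hε : 0 < ρ ^ 2 / (32 * n) := by positivity
  obtain ⟨H1, hH1, hl1, hs1⟩ := hs_approx hn x0 hρ U1 hU1.cont.continuousOn (-5/4) hε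
  obtain ⟨H2, hH2, hl2, hs2⟩ := hs_approx hn y0 hρ U2 hU2.cont.continuousOn (-5/4) hε
  have c1 := hs_cmp hU1 hsub1 x0 ρ hG1 hH1 (fun x => by rw [hl1]; norm_num)
    (fun x hx => (hs1 x hx).1) x0 (mem_closedBall_self hρ.le)
  have c2 := hs_cmp hU2 hsub2 y0 ρ hG2 hH2 (fun x => by rw [hl2]; norm_num)
    (fun x hx => (hs2 x hx).1) y0 (mem_closedBall_self hρ.le)
  have hsq : ContDiff ℝ 2 (fun x : E n => ‖x - 0‖ ^ 2) := (contDiff_id.sub contDiff_const).norm_sq ℝ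
  have d1 : ContDiff ℝ 2 (fun z => H1 (x0 + z)) := hH1.comp (contDiff_const.add contDiff_id)
  have d2 : ContDiff ℝ 2 (fun z => H2 (y0 + R z)) := hH2.comp (contDiff_const.add R.contDiff)
  have d3 : ContDiff ℝ 2 (fun z => - Ψ z) := hΨ.neg
  have d4 : ContDiff ℝ 2 (fun z : E n => (-(1 / (8 * n)) : ℝ) * ‖z - 0‖ ^ 2) := contDiff_const.mul hsq
  have d12 := d1.add d2
  have d34 := d3.add d4
  have h := hs_max_strict (d12.add d34) 0 ρ
    (U1 x0 + U2 y0 + 2 * (ρ ^ 2 / (32 * n)) - ρ ^ 2 / (8 * n)) ?_ ?_ 0 (mem_closedBall_self hρ.le)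
  · simp only [add_zero, map_zero, hΨ0, neg_zero, sub_zero, norm_zero] at h
    have e : ρ ^ 2 / (8 * n) = 4 * (ρ ^ 2 / (32 * n)) := by field_simp; norm_num
    rw [e] at h
    norm_num at h
    linarith
  · intro x _
    rw [hs_lap_add d12 d34, hs_lap_add d1 d2, hs_lap_add d3 d4, hs_lap_trans hH1, hs_lap_isom hH2,
      hs_lap_neg, hs_lap_smul hsq, hs_lap_sq, hl1, hl2]
    have e : (-(1 / (8 * n)) : ℝ) * (2 * n) = - (1/4) := by field_simp; norm_num
    rw [e]
    linarith [hlΨ x]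
  · intro z hz
    have hz' : ‖z‖ = ρ := by simpa using hz
    have a1 := (hs1 (x0 + z) (by simp [hz'])).2
    have a2 := (hs2 (y0 + R z) (by simp [hz'])).2
    have a3 := hmax z (by simp [hz'])
    simp only [sub_zero, hz']
    have e : (-(1 / (8 * n)) : ℝ) * ρ ^ 2 = - (ρ ^ 2 / (8 * n)) := by ring
    rw [e]
    linarith

theorem hs_limit_ineq {a b C t0 : ℝ} (ht0 : 0 < t0)
    (h : ∀ t, 0 < t → t < t0 → a * t ≤ b * t + C * t ^ 2) : a ≤ b := by
  by_contra hcon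
  push Not at hcon
  have hC : 0 < |C| + 1 := by positivity
  set t := min (t0 / 2) ((a - b) / (2 * (|C| + 1))) with ht
  have hpos : 0 < t := lt_min (by linarith) (div_pos (by linarith) (by linarith))
  have h1 := h t hpos (lt_of_le_of_lt (min_le_left _ _) (by linarith))
  have h2 : t ≤ (a - b) / (2 * (|C| + 1)) := min_le_right _ _
  rw [le_div_iff₀ (by linarith)] at h2
  have h3 : a ≤ b + C * t := by
    have : a * t ≤ (b + C * t) * t := by nlinarith
    exact le_of_mul_le_mul_right this hpos
  have h4 : C * t ≤ |C| * t := by gcongr; exact le_abs_self C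
  nlinarith


set_option maxHeartbeats 1000000 in
theorem hs_lip_core {n : ℕ} (hn : 0 < n) {c : E n} {r q L k κ s d : ℝ} (hr : 0 < r) (hr1 : r ≤ 1)
    (hq1 : 1 ≤ q) (hL : L = (2 * n + 22) * q) (hk : k = 8 * q / r) (hκpos : 0 < κ)
    (hsr : s ≤ r / 8)
    {u U1 U2 : E n → ℝ} (hu : Continuous u)
    (hs1 : HsSub (ball c r) u) (hs2 : HsSub (ball c r) (fun x => - u x))
    (hU1 : HsConv (closedBall c r) κ u U1) (hU2 : HsConv (closedBall c r) κ (fun x => - u x) U2)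
    (hz1 : ∀ x ∈ closedBall c r, ∀ z ∈ closedBall c r, U1 x = u z - κ * ‖x - z‖ ^ 2 → ‖x - z‖ ≤ s)
    (hz2 : ∀ x ∈ closedBall c r, ∀ z ∈ closedBall c r, U2 x = - u z - κ * ‖x - z‖ ^ 2 → ‖x - z‖ ≤ s)
    {x0 y0 : E n} (hx0K : x0 ∈ closedBall c r) (hy0K : y0 ∈ closedBall c r)
    (hx0c : ‖x0 - c‖ ≤ r / 2) (hy0c : ‖y0 - c‖ ≤ 3 * r / 4)
    (hd : d = ‖x0 - y0‖) (hdpos : 0 < d) (hdlt : d < r / 4) (hxlt : ‖x0 - c‖ < r / 2)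
    (hmaxW : ∀ x y, ‖x - c‖ ≤ r / 2 → ‖x - y‖ ≤ r / 4 →
      U1 x + U2 y - L * (‖x - y‖ - ‖x - y‖ ^ 2 / r) - k * ‖x - c‖ ^ 2 ≤
      U1 x0 + U2 y0 - L * (d - d ^ 2 / r) - k * ‖x0 - c‖ ^ 2) : False := by
  have hn1 : (1:ℝ) ≤ n := by exact_mod_cast hn
  have hkr : k * r = 8 * q := by rw [hk]; field_simp
  have hkpos : 0 < k := by rw [hk]; positivity
  have hLpos : 0 < L := by rw [hL]; positivity
  have hLq : 24 * q ≤ L := by rw [hL]; nlinarith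
  have hK : IsCompact (closedBall c r) := isCompact_closedBall c r
  have hint : interior (closedBall c r) = ball c r := interior_closedBall c hr.ne'
  have hun : Continuous (fun x => - u x) := hu.neg
  -- direction
  obtain ⟨ν, hν⟩ : ∃ ν : E n, ν = (1 / d) • (x0 - y0) := ⟨_, rfl⟩
  have hν1 : ‖ν‖ = 1 := by
    rw [hν, norm_smul, ← hd]
    simp [hdpos.ne', abs_of_pos hdpos]
  have hdν : x0 - y0 = d • ν := by
    rw [hν, smul_smul]
    field_simp
    simp
  have hνν : ⟪ν, ν⟫ = 1 := by rw [real_inner_self_eq_norm_sq, hν1]; norm_num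
  have hφ2 : L / 2 ≤ L * (1 - 2 * d / r) := by
    have : 2 * d / r ≤ 1 / 2 := by rw [div_le_iff₀ hr]; linarith
    nlinarith
  have hin : ∀ a : E n, |⟪a, ν⟫| ≤ ‖a‖ := by
    intro a
    have := abs_real_inner_le_norm a ν
    rwa [hν1, mul_one] at this
  have hexp : ∀ (a : E n) (t : ℝ), ‖a + t • ν‖ ^ 2 = ‖a‖ ^ 2 + 2 * t * ⟪a, ν⟫ + t ^ 2 := by
    intro a t
    rw [norm_add_sq_real, inner_smul_right, norm_smul, hν1, mul_one, Real.norm_eq_abs, sq_abs]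
    ring
  have hnt : ∀ t : ℝ, 0 ≤ t → ‖t • ν‖ = t := by
    intro t ht
    rw [norm_smul, hν1, mul_one, Real.norm_eq_abs, abs_of_nonneg ht]
  -- gradient bound at x0
  have hg1 : ∀ z ∈ closedBall c r, U1 x0 = u z - κ * ‖x0 - z‖ ^ 2 → z ∈ interior (closedBall c r) ∧ 1 < κ * ‖x0 - z‖ := by
    intro z hz e
    constructor
    · rw [hint, mem_ball, dist_eq_norm]
      have h1 := hz1 x0 hx0K z hz e
      have h2 : z - c = (x0 - c) - (x0 - z) := by abel
      rw [h2]
      linarith [norm_sub_le (x0 - c) (x0 - z)]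
    · have hlim : 2 * κ * ⟪x0 - z, ν⟫ ≤ -(L * (1 - 2 * d / r)) - 2 * k * ⟪x0 - c, ν⟫ := by
        refine hs_limit_ineq (C := κ + k - L / r) (t0 := min d (r / 2 - ‖x0 - c‖))
          (lt_min hdpos (by linarith)) fun t ht htl => ?_
        have ht1 : t < d := lt_of_lt_of_le htl (min_le_left _ _)
        have ht2 : t < r / 2 - ‖x0 - c‖ := lt_of_lt_of_le htl (min_le_right _ _)
        have e1 : x0 + (-t) • ν - y0 = (d - t) • ν := by
          rw [add_sub_right_comm, hdν]; module
        have e2 : ‖x0 + (-t) • ν - y0‖ = d - t := by rw [e1, hnt _ (by linarith)]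
        have e3 : x0 + (-t) • ν - c = (x0 - c) + (-t) • ν := by abel
        have e4 : x0 + (-t) • ν - z = (x0 - z) + (-t) • ν := by abel
        have m := hmaxW (x0 + (-t) • ν) y0 (by
          rw [e3]
          refine (norm_add_le _ _).trans ?_
          rw [neg_smul, norm_neg, hnt t ht.le]; linarith) (by rw [e2]; linarith)
        rw [e2, e3, hexp] at m
        have l := hU1.le (x0 + (-t) • ν) z hz
        rw [e4, hexp] at l
        have e5 : (d - t) ^ 2 / r = d ^ 2 / r - 2 * d / r * t + t ^ 2 / r := by ring
        rw [e5] at m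
        have e6 : L / r * t ^ 2 = L * (t ^ 2 / r) := by ring
        nlinarith
      have b1 := (abs_le.1 (hin (x0 - z))).1
      have b2 := (abs_le.1 (hin (x0 - c))).1
      have b3 : -(k * r) ≤ 2 * k * ⟪x0 - c, ν⟫ := by nlinarith
      have b4 : -(2 * κ * ‖x0 - z‖) ≤ 2 * κ * ⟪x0 - z, ν⟫ := by nlinarith
      nlinarith
  have hg2 : ∀ z ∈ closedBall c r, U2 y0 = - u z - κ * ‖y0 - z‖ ^ 2 → z ∈ interior (closedBall c r) ∧ 1 < κ * ‖y0 - z‖ := by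
    intro z hz e
    constructor
    · rw [hint, mem_ball, dist_eq_norm]
      have h1 := hz2 y0 hy0K z hz e
      have h2 : z - c = (y0 - c) - (y0 - z) := by abel
      rw [h2]
      linarith [norm_sub_le (y0 - c) (y0 - z)]
    · have hlim : -(2 * κ * ⟪y0 - z, ν⟫) ≤ -(L * (1 - 2 * d / r)) := by
        refine hs_limit_ineq (C := κ - L / r) (t0 := d) hdpos fun t ht ht1 => ?_
        have e1 : x0 - (y0 + t • ν) = (d - t) • ν := by
          rw [← sub_sub, hdν]; module
        have e2 : ‖x0 - (y0 + t • ν)‖ = d - t := by rw [e1, hnt _ (by linarith)]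
        have e4 : y0 + t • ν - z = (y0 - z) + t • ν := by abel
        have m := hmaxW x0 (y0 + t • ν) hx0c (by rw [e2]; linarith)
        rw [e2] at m
        have l := hU2.le (y0 + t • ν) z hz
        rw [e4, hexp] at l
        have e5 : (d - t) ^ 2 / r = d ^ 2 / r - 2 * d / r * t + t ^ 2 / r := by ring
        rw [e5] at m
        have e6 : L / r * t ^ 2 = L * (t ^ 2 / r) := by ring
        nlinarith
      have b1 := (abs_le.1 (hin (y0 - z))).2
      have b4 : 2 * κ * ⟪y0 - z, ν⟫ ≤ 2 * κ * ‖y0 - z‖ := by nlinarith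
      nlinarith
  obtain ⟨ρ1, hρ1, hG1⟩ := hs_gap hK hu hU1 x0 hg1
  obtain ⟨ρ2, hρ2, hG2⟩ := hs_gap hK hun hU2 y0 hg2
  set ρ := min (min ρ1 ρ2) (min (d / 2) (min (r / 2 - ‖x0 - c‖) ((r / 4 - d) / 2))) with hρ
  have hρpos : 0 < ρ := by
    refine lt_min (lt_min hρ1 hρ2) (lt_min (by linarith) (lt_min (by linarith) (by linarith)))
  have r1 : ρ ≤ ρ1 := (min_le_left _ _).trans (min_le_left _ _)
  have r2 : ρ ≤ ρ2 := (min_le_left _ _).trans (min_le_right _ _)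
  have r3 : ρ ≤ d / 2 := (min_le_right _ _).trans (min_le_left _ _)
  have r4 : ρ ≤ r / 2 - ‖x0 - c‖ :=
    (min_le_right _ _).trans ((min_le_right _ _).trans (min_le_left _ _))
  have r5 : ρ ≤ (r / 4 - d) / 2 :=
    (min_le_right _ _).trans ((min_le_right _ _).trans (min_le_right _ _))
  let R : E n ≃ₗᵢ[ℝ] E n := ((ℝ ∙ ν).reflection).trans (LinearIsometryEquiv.neg ℝ)
  have hR : ∀ z, R z = z - (2 * ⟪ν, z⟫) • ν := by
    intro z
    have : R z = - ((ℝ ∙ ν).reflection z) := rfl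
    rw [this, Submodule.reflection_singleton_apply, hν1]
    simp only [RCLike.ofReal_real_eq_id, id_eq, one_pow, div_one]
    module
  let Ψ1 : E n → ℝ := fun z => 0 + (2 * L * (1 - 2 * d / r)) * ⟪ν, z⟫ + (-(4 * L / r)) * ⟪ν, z⟫ ^ 2
  let Ψ2 : E n → ℝ := fun z => k * ‖z - (c - x0)‖ ^ 2
  have hi : ContDiff ℝ 2 (fun z : E n => ⟪ν, z⟫) := contDiff_const.inner ℝ contDiff_id
  have hsq : ContDiff ℝ 2 (fun z : E n => ‖z - (c - x0)‖ ^ 2) :=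
    (contDiff_id.sub contDiff_const).norm_sq ℝ
  have hc1 : ContDiff ℝ 2 Ψ1 := by simp only [Ψ1]; fun_prop
  have hc2 : ContDiff ℝ 2 Ψ2 := contDiff_const.mul hsq
  have hc12 : ContDiff ℝ 2 (fun z => Ψ1 z + Ψ2 z) := hc1.add hc2
  refine hs_double hn hU1 hU2 (by rw [hint]; exact hs1) (by rw [hint]; exact hs2) x0 y0 hρpos
    (fun x hx => hG1 x (ball_subset_ball r1 hx)) (fun x hx => hG2 x (ball_subset_ball r2 hx)) R
    (Ψ := fun z => (Ψ1 z + Ψ2 z) + (- (k * ‖x0 - c‖ ^ 2))) (hc12.add contDiff_const) ?_ ?_ ?_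
  · intro z
    rw [hs_lap_add hc12 contDiff_const, hs_lap_const, hs_lap_add hc1 hc2]
    have a1 : lap Ψ1 z = 2 * (-(4 * L / r)) * ‖ν‖ ^ 2 := hs_lap_ridge ν _ _ _ z
    have a2 : lap Ψ2 z = k * (2 * n) := by
      rw [← hs_lap_sq (c - x0) z]
      exact hs_lap_smul hsq k z
    rw [a1, a2, hν1]
    have a3 : 2 * (-(4 * L / r)) * 1 ^ 2 + k * (2 * n) + 0 = - (176 * q) / r := by
      rw [hL, hk]; field_simp; ring
    rw [a3, div_le_iff₀ hr]
    nlinarith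
  · have : ‖(0:E n) - (c - x0)‖ = ‖x0 - c‖ := by congr 1; abel
    simp only [Ψ1, Ψ2, this, inner_zero_right]
    ring
  · intro z hz
    have hz' : ‖z‖ ≤ ρ := by simpa using hz
    set σ := ⟪ν, z⟫ with hσ
    have hσz : |σ| ≤ ρ := by
      have := hin z
      rw [real_inner_comm] at this
      exact this.trans hz'
    obtain ⟨s1, s2⟩ := abs_le.1 hσz
    have e1 : (x0 + z) - (y0 + R z) = (d + 2 * σ) • ν := by
      rw [hR]
      have : (x0 + z) - (y0 + (z - (2 * ⟪ν, z⟫) • ν)) = (x0 - y0) + (2 * ⟪ν, z⟫) • ν := by abel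
      rw [this, hdν, ← hσ]; module
    have e2 : ‖(x0 + z) - (y0 + R z)‖ = d + 2 * σ := by
      rw [e1, hnt _ (by linarith)]
    have m := hmaxW (x0 + z) (y0 + R z) (by
      rw [add_sub_right_comm]
      linarith [norm_add_le (x0 - c) z]) (by rw [e2]; linarith)
    rw [e2] at m
    have e3 : ‖z - (c - x0)‖ = ‖x0 + z - c‖ := by congr 1; abel
    simp only [Ψ1, Ψ2, e3, ← hσ]
    have e5 : (d + 2 * σ) ^ 2 / r = d ^ 2 / r + 4 * (d / r) * σ + 4 * σ ^ 2 / r := by ring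
    rw [e5] at m
    have e6 : (2 * L * (1 - 2 * d / r)) * σ = 2 * L * σ - L * (4 * (d / r) * σ) := by ring
    have e7 : (-(4 * L / r)) * σ ^ 2 = - (L * (4 * σ ^ 2 / r)) := by ring
    rw [e6, e7]
    linarith


set_option maxHeartbeats 1000000 in
theorem hs_lip {n : ℕ} (hn : 0 < n) {c : E n} {r M : ℝ} (hr : 0 < r) (hr1 : r ≤ 1) (hM : r ≤ M)
    {u : E n → ℝ} (hu : Continuous u) (h0 : ∀ x ∈ closedBall c r, 0 ≤ u x ∧ u x ≤ M)
    (hs1 : HsSub (ball c r) u) (hs2 : HsSub (ball c r) (fun x => - u x))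
    (y : E n) (hy : ‖c - y‖ ≤ r / 4) : u c - u y ≤ (2 * n + 22) * (M / r) * ‖c - y‖ := by
  by_contra hcon
  push Not at hcon
  have hn1 : (1:ℝ) ≤ n := by exact_mod_cast hn
  have hMpos : 0 < M := lt_of_lt_of_le hr hM
  obtain ⟨q, hq⟩ : ∃ t : ℝ, t = M / r := ⟨_, rfl⟩
  rw [← hq] at hcon
  have hq1 : 1 ≤ q := by rw [hq, le_div_iff₀ hr]; linarith
  have hqr : q * r = M := by rw [hq]; field_simp
  obtain ⟨L, hL⟩ : ∃ t : ℝ, t = (2 * n + 22) * q := ⟨_, rfl⟩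
  rw [← hL] at hcon
  obtain ⟨k, hk⟩ : ∃ t : ℝ, t = 8 * q / r := ⟨_, rfl⟩
  have hkr : k * r = 8 * q := by rw [hk]; field_simp
  have hkpos : 0 < k := by rw [hk]; positivity
  have hLpos : 0 < L := by rw [hL]; positivity
  have hLq : 24 * q ≤ L := by rw [hL]; nlinarith
  obtain ⟨K, hKdef⟩ : ∃ t : Set (E n), t = closedBall c r := ⟨_, rfl⟩
  rw [← hKdef] at h0
  have hK : IsCompact K := hKdef ▸ isCompact_closedBall c r
  have hcK : c ∈ K := hKdef ▸ mem_closedBall_self hr.le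
  obtain ⟨w0, hw0⟩ : ∃ t : ℝ, t = u c - u y - L * ‖c - y‖ := ⟨_, rfl⟩
  have hw0pos : 0 < w0 := by linarith
  obtain ⟨η, hη, hunif⟩ := Metric.uniformContinuousOn_iff.1
    (hK.uniformContinuousOn_of_continuous hu.continuousOn) w0 hw0pos
  obtain ⟨s, hs⟩ : ∃ t : ℝ, t = min (η / 3) (r / 8) := ⟨_, rfl⟩
  have hspos : 0 < s := by
    rw [hs]; exact lt_min (by linarith) (by linarith)
  have hsη : s ≤ η / 3 := hs.trans_le (min_le_left _ _)
  have hsr : s ≤ r / 8 := hs.trans_le (min_le_right _ _)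
  obtain ⟨κ, hκ⟩ : ∃ t : ℝ, t = M / s ^ 2 := ⟨_, rfl⟩
  have hκpos : 0 < κ := by rw [hκ]; positivity
  have hsmall : ∀ t : ℝ, κ * t ^ 2 ≤ M → t ≤ s := by
    intro t ht
    have : t ^ 2 ≤ s ^ 2 := by
      rw [hκ, div_mul_eq_mul_div, div_le_iff₀ (by positivity)] at ht
      exact le_of_mul_le_mul_left ht hMpos
    exact le_of_abs_le (abs_le_of_sq_le_sq this hspos.le)
  obtain ⟨U1, hU1⟩ := hs_conv_exists hK ⟨c, hcK⟩ κ hu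
  obtain ⟨U2, hU2⟩ := hs_conv_exists hK ⟨c, hcK⟩ κ (u := fun x => - u x) hu.neg
  have hU1c := hU1.cont
  have hU2c := hU2.cont
  have hU1ge : ∀ x ∈ K, u x ≤ U1 x := by
    intro x hx
    simpa using hU1.le x x hx
  have hU2ge : ∀ x ∈ K, - u x ≤ U2 x := by
    intro x hx
    simpa using hU2.le x x hx
  have hU1le : ∀ x, U1 x ≤ M := by
    intro x
    obtain ⟨z, hz, e⟩ := hU1.ex x
    have : 0 ≤ κ * ‖x - z‖ ^ 2 := by positivity
    linarith [(h0 z hz).2]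
  have hU2le : ∀ x, U2 x ≤ 0 := by
    intro x
    obtain ⟨z, hz, e⟩ := hU2.ex x
    have : 0 ≤ κ * ‖x - z‖ ^ 2 := by positivity
    linarith [(h0 z hz).1]
  have hz1 : ∀ x ∈ K, ∀ z ∈ K, U1 x = u z - κ * ‖x - z‖ ^ 2 → ‖x - z‖ ≤ s := by
    intro x hx z hz e
    apply hsmall
    linarith [hU1ge x hx, (h0 z hz).2, (h0 x hx).1]
  have hz2 : ∀ x ∈ K, ∀ z ∈ K, U2 x = - u z - κ * ‖x - z‖ ^ 2 → ‖x - z‖ ≤ s := by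
    intro x hx z hz e
    apply hsmall
    linarith [hU2ge x hx, (h0 z hz).1, (h0 x hx).2]
  have hdiag : ∀ x ∈ K, U1 x + U2 x < w0 := by
    intro x hx
    obtain ⟨z, hz, e⟩ := hU1.ex x
    obtain ⟨z', hz', e'⟩ := hU2.ex x
    have a1 := hz1 x hx z hz e
    have a2 := hz2 x hx z' hz' e'
    have b1 : 0 ≤ κ * ‖x - z‖ ^ 2 := by positivity
    have b2 : 0 ≤ κ * ‖x - z'‖ ^ 2 := by positivity
    have hd : dist z z' < η := by
      have : dist z z' ≤ dist z x + dist x z' := dist_triangle _ _ _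
      rw [dist_comm z x, dist_eq_norm x z, dist_eq_norm x z'] at this
      linarith
    have := hunif z hz z' hz' hd
    rw [Real.dist_eq] at this
    have := (abs_lt.1 this).2
    linarith
  -- the doubled function
  let W : E n × E n → ℝ := fun p => U1 p.1 + U2 p.2
    - L * (‖p.1 - p.2‖ - ‖p.1 - p.2‖ ^ 2 / r) - k * ‖p.1 - c‖ ^ 2
  have hWc : Continuous W := by fun_prop
  let Q : Set (E n × E n) := {p | ‖p.1 - c‖ ≤ r / 2 ∧ ‖p.1 - p.2‖ ≤ r / 4}
  have hQcl : IsClosed Q := by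
    have a : IsClosed {p : E n × E n | ‖p.1 - c‖ ≤ r / 2} :=
      isClosed_le (by fun_prop) continuous_const
    have b : IsClosed {p : E n × E n | ‖p.1 - p.2‖ ≤ r / 4} :=
      isClosed_le (by fun_prop) continuous_const
    exact a.inter b
  have hQK : ∀ p ∈ Q, ‖p.1 - c‖ ≤ r / 2 ∧ ‖p.2 - c‖ ≤ 3 * r / 4 := by
    rintro p ⟨hp1, hp2⟩
    refine ⟨hp1, ?_⟩
    have h3 : p.2 - c = (p.1 - c) - (p.1 - p.2) := by abel
    rw [h3]
    linarith [norm_sub_le (p.1 - c) (p.1 - p.2)]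
  have hQcomp : IsCompact Q := by
    refine (hK.prod hK).of_isClosed_subset hQcl fun p hp => ?_
    obtain ⟨h1, h2⟩ := hQK p hp
    constructor
    · rw [hKdef, mem_closedBall, dist_eq_norm]; linarith
    · rw [hKdef, mem_closedBall, dist_eq_norm]; linarith
  have hcy : (c, y) ∈ Q := by
    refine ⟨?_, hy⟩
    simp; linarith
  obtain ⟨⟨x0, y0⟩, hp0, hpmax⟩ := hQcomp.exists_isMaxOn ⟨_, hcy⟩ hWc.continuousOn
  have hmaxW : ∀ x y, ‖x - c‖ ≤ r / 2 → ‖x - y‖ ≤ r / 4 → W (x, y) ≤ W (x0, y0) :=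
    fun x y h1 h2 => hpmax (show (x, y) ∈ Q from ⟨h1, h2⟩)
  obtain ⟨hx0c, hy0c⟩ := hQK _ hp0
  have hd4 : ‖x0 - y0‖ ≤ r / 4 := hp0.2
  simp only at hx0c hy0c
  have hx0K : x0 ∈ K := by rw [hKdef, mem_closedBall, dist_eq_norm]; linarith
  have hy0K : y0 ∈ K := by rw [hKdef, mem_closedBall, dist_eq_norm]; linarith
  have hyK : y ∈ K := by
    rw [hKdef, mem_closedBall, dist_eq_norm, norm_sub_rev]; linarith
  have hWpos : w0 ≤ W (x0, y0) := by
    refine le_trans ?_ (hmaxW c y (by simp; linarith) hy)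
    simp only [W]
    have a1 := hU1ge c hcK
    have a2 := hU2ge y hyK
    have a3 : 0 ≤ L * (‖c - y‖ ^ 2 / r) := by positivity
    simp only [sub_self, norm_zero]
    rw [hw0]
    nlinarith
  obtain ⟨d, hd⟩ : ∃ t : ℝ, t = ‖x0 - y0‖ := ⟨_, rfl⟩
  rw [← hd] at hd4
  have hW0 : W (x0, y0) = U1 x0 + U2 y0 - L * (d - d ^ 2 / r) - k * ‖x0 - c‖ ^ 2 := by
    rw [hd]
  have hd0 : 0 ≤ d := hd ▸ norm_nonneg _
  have hphi : 0 ≤ d - d ^ 2 / r := by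
    have : d ^ 2 / r ≤ d := by rw [div_le_iff₀ hr]; nlinarith
    linarith
  have hdpos : 0 < d := by
    rcases hd0.lt_or_eq with h | h
    · exact h
    · exfalso
      have hxy : x0 = y0 := by
        rw [← sub_eq_zero, ← norm_eq_zero, ← hd]; exact h.symm
      have := hdiag x0 hx0K
      rw [hW0, ← h, ← hxy] at hWpos
      have : 0 ≤ k * ‖x0 - c‖ ^ 2 := by positivity
      norm_num at hWpos
      linarith
  have hdlt : d < r / 4 := by
    rcases hd4.lt_or_eq with h | h
    · exact h
    · exfalso
      rw [hW0, h] at hWpos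
      have e1 : r / 4 - (r / 4) ^ 2 / r = 3 * r / 16 := by field_simp; norm_num
      rw [e1] at hWpos
      have : 0 ≤ k * ‖x0 - c‖ ^ 2 := by positivity
      nlinarith [hU1le x0, hU2le y0]
  have hxlt : ‖x0 - c‖ < r / 2 := by
    rcases hx0c.lt_or_eq with h | h
    · exact h
    · exfalso
      rw [hW0, h] at hWpos
      have e1 : k * (r / 2) ^ 2 = 2 * M := by
        have : k * (r / 2) ^ 2 = (k * r) * r / 4 := by ring
        rw [this, hkr, ← hqr]; ring
      rw [e1] at hWpos
      have : 0 ≤ L * (d - d ^ 2 / r) := mul_nonneg hLpos.le hphi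
      linarith [hU1le x0, hU2le y0]
  subst hKdef
  refine hs_lip_core hn hr hr1 hq1 hL hk hκpos hsr hu hs1 hs2 hU1 hU2 hz1 hz2 hx0K hy0K hx0c hy0c
    hd hdpos hdlt hxlt fun x y h1 h2 => ?_
  rw [← hW0]
  exact hmaxW x y h1 h2

theorem hs_bar_contDiff {n : ℕ} (x0 : E n) {a : ℝ} (ha : 0 < a) (m : ℕ) :
    ContDiff ℝ 2 (fun x : E n => ((‖x - x0‖ ^ 2 + a)⁻¹) ^ (m + 1)) := by
  have hsq : ContDiff ℝ 2 (fun x : E n => ‖x - x0‖ ^ 2) :=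
    (contDiff_id.sub contDiff_const).norm_sq ℝ
  exact ((hsq.add contDiff_const).inv (fun x => by positivity)).pow _

theorem hs_bar_line {n : ℕ} (x0 : E n) {a : ℝ} (ha : 0 < a) (m : ℕ) (x w : E n) (t : ℝ) :
    HasDerivAt (fun t : ℝ => ((‖x + t • w - x0‖ ^ 2 + a)⁻¹) ^ (m + 1))
      (-((m + 1) * (2 * ⟪x - x0, w⟫ + 2 * t * ‖w‖ ^ 2) * ((‖x + t • w - x0‖ ^ 2 + a)⁻¹) ^ (m + 2))) t := by
  have hp : ∀ t : ℝ, ‖x + t • w - x0‖ ^ 2 + a = ‖x - x0‖ ^ 2 + 2 * t * ⟪x - x0, w⟫ + t ^ 2 * ‖w‖ ^ 2 + a := by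
    intro t
    have : x + t • w - x0 = (x - x0) + t • w := by abel
    rw [this, norm_add_sq_real, inner_smul_right, norm_smul, mul_pow, Real.norm_eq_abs, sq_abs]
    ring
  have hpos : 0 < ‖x + t • w - x0‖ ^ 2 + a := by positivity
  have h1 : HasDerivAt (fun t : ℝ => ‖x + t • w - x0‖ ^ 2 + a) (2 * ⟪x - x0, w⟫ + 2 * t * ‖w‖ ^ 2) t := by
    have hf : (fun t : ℝ => ‖x + t • w - x0‖ ^ 2 + a) =
      fun t => ‖x - x0‖ ^ 2 + 2 * t * ⟪x - x0, w⟫ + t ^ 2 * ‖w‖ ^ 2 + a := funext hp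
    rw [hf]
    have := ((((hasDerivAt_id t).const_mul (2 * ⟪x - x0, w⟫)).const_add (‖x - x0‖ ^ 2)).add
      (((hasDerivAt_id t).pow 2).mul_const (‖w‖ ^ 2))).add_const a
    refine (this.congr_deriv (by simp)).congr_of_eventuallyEq (Eventually.of_forall fun s => ?_)
    simp; ring
  have h2 := (h1.inv hpos.ne').pow (m + 1)
  refine h2.congr_deriv ?_
  push_cast
  simp only [Nat.add_sub_cancel, Pi.inv_apply]
  rw [div_eq_mul_inv, ← inv_pow]
  ring

theorem hs_bar_d2 {n : ℕ} (x0 : E n) {a : ℝ} (ha : 0 < a) (m : ℕ) (x w : E n) :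
    deriv (deriv (fun t : ℝ => ((‖x + t • w - x0‖ ^ 2 + a)⁻¹) ^ (m + 1))) 0 =
      (m + 1) * (m + 2) * 4 * ⟪x - x0, w⟫ ^ 2 * ((‖x - x0‖ ^ 2 + a)⁻¹) ^ (m + 3)
        - (m + 1) * 2 * ‖w‖ ^ 2 * ((‖x - x0‖ ^ 2 + a)⁻¹) ^ (m + 2) := by
  have h0 : deriv (fun t : ℝ => ((‖x + t • w - x0‖ ^ 2 + a)⁻¹) ^ (m + 1)) = fun t =>
    (-((m + 1) * (2 * ⟪x - x0, w⟫ + 2 * t * ‖w‖ ^ 2) * ((‖x + t • w - x0‖ ^ 2 + a)⁻¹) ^ (m + 2))) :=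
    funext fun t => (hs_bar_line x0 ha m x w t).deriv
  rw [h0]
  have h1 := hs_bar_line x0 ha (m + 1) x w 0
  have h2 : HasDerivAt (fun t : ℝ => ((m:ℝ) + 1) * (2 * ⟪x - x0, w⟫ + 2 * t * ‖w‖ ^ 2))
      (((m:ℝ) + 1) * (2 * ‖w‖ ^ 2)) 0 := by
    have := (((hasDerivAt_id (0:ℝ)).const_mul (2 * ‖w‖ ^ 2)).const_add (2 * ⟪x - x0, w⟫)).const_mul ((m:ℝ) + 1)
    refine (this.congr_deriv (by simp)).congr_of_eventuallyEq (Eventually.of_forall fun s => ?_)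
    simp; left; ring
  have h3 := ((h2.mul h1).neg).deriv
  refine Eq.trans ?_ (h3.trans ?_)
  · rfl
  · push_cast
    simp only [zero_smul, add_zero, mul_zero, zero_mul]
    ring

theorem hs_bar_lap {n : ℕ} (x0 : E n) {a : ℝ} (ha : 0 < a) (m : ℕ) (hm : n ≤ m + 1) (x : E n)
    (hx : a ≤ ‖x - x0‖ ^ 2) :
    2 * ((‖x - x0‖ ^ 2 + a)⁻¹) ^ (m + 2) ≤
      lap (fun x : E n => ((‖x - x0‖ ^ 2 + a)⁻¹) ^ (m + 1)) x := by
  rw [hs_lap_line (hs_bar_contDiff x0 ha m)]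
  simp only [hs_bar_d2 x0 ha m x]
  have hZ : ∑ i : Fin n, ⟪x - x0, EuclideanSpace.single i (1:ℝ)⟫ ^ 2 = ‖x - x0‖ ^ 2 := by
    rw [EuclideanSpace.norm_sq_eq]
    refine Finset.sum_congr rfl fun i _ => ?_
    rw [real_inner_comm, EuclideanSpace.inner_single_left]
    simp
  rw [Finset.sum_sub_distrib, ← Finset.sum_mul, ← Finset.mul_sum, hZ]
  simp only [PiLp.norm_single, norm_one, one_pow, Finset.sum_const, Finset.card_univ, Fintype.card_fin, nsmul_eq_mul]
  obtain ⟨Z, hZd⟩ : ∃ Z, Z = ‖x - x0‖ ^ 2 := ⟨_, rfl⟩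
  rw [← hZd] at hx ⊢
  obtain ⟨Q, hQ⟩ : ∃ Q, Q = (Z + a)⁻¹ := ⟨_, rfl⟩
  have hQ1 : Q * (Z + a) = 1 := by rw [hQ]; apply inv_mul_cancel₀; linarith
  have hQpos : 0 < Q := by rw [hQ]; apply inv_pos.2; linarith
  rw [← hQ]
  have hQm : 0 < Q ^ (m + 2) := by positivity
  have hm' : (n:ℝ) ≤ m + 1 := by exact_mod_cast hm
  have hm0 : (0:ℝ) ≤ m := Nat.cast_nonneg m
  have e : ((m:ℝ) + 1) * (m + 2) * 4 * Z * Q ^ (m + 3) - n * ((m + 1) * 2 * 1 * Q ^ (m + 2)) =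
    Q ^ (m + 2) * ((m + 1) * (4 * (m + 2) * (Z * Q) - 2 * n)) := by ring
  rw [e, mul_comm 2]
  gcongr
  have hZQ : 1 / 2 ≤ Z * Q := by nlinarith
  have : 4 * ((m:ℝ) + 2) * (1 / 2) ≤ 4 * (m + 2) * (Z * Q) := by gcongr
  nlinarith

theorem hs_bar_grad {n : ℕ} (x0 : E n) {a : ℝ} (ha : 0 < a) (m : ℕ) (x : E n) (hx : x ≠ x0) :
    2 * ‖x - x0‖ * ((‖x - x0‖ ^ 2 + a)⁻¹) ^ (m + 2) ≤
      ‖fderiv ℝ (fun x : E n => ((‖x - x0‖ ^ 2 + a)⁻¹) ^ (m + 1)) x‖ := by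
  have h1 := hs_hasDerivAt_line (hs_bar_contDiff x0 ha m) x (x - x0) 0
  have h2 := h1.unique (hs_bar_line x0 ha m x (x - x0) 0)
  have hpos : 0 < ‖x - x0‖ := norm_pos_iff.2 (sub_ne_zero.2 hx)
  have h3 := (fderiv ℝ (fun x : E n => ((‖x - x0‖ ^ 2 + a)⁻¹) ^ (m + 1)) x).le_opNorm (x - x0)
  simp only [zero_smul, add_zero, mul_zero, zero_mul, real_inner_self_eq_norm_sq] at h2
  rw [h2, norm_neg, Real.norm_eq_abs, abs_of_nonneg (by positivity)] at h3
  refine le_of_mul_le_mul_right ?_ hpos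
  refine le_trans ?_ h3
  have hm0 : (0:ℝ) ≤ m := Nat.cast_nonneg m
  have : 0 ≤ (m:ℝ) * (2 * ‖x - x0‖ ^ 2 * ((‖x - x0‖ ^ 2 + a)⁻¹) ^ (m + 2)) := by positivity
  nlinarith

theorem hs_barrier {n : ℕ} (m : ℕ) (hm : n ≤ m + 1) {x0 : E n} {t R V : ℝ} (ht : 0 < t)
    (hR1 : R ≤ 1) {v : E n → ℝ} (hv : Continuous v)
    (hs : HsSub (ball x0 R) (fun x => - v x))
    (h0 : ∀ x ∈ closedBall x0 R, 0 ≤ v x)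
    (hin : ∀ x, ‖x - x0‖ ≤ t → V ≤ v x)
    (hA : 2 ^ (m + 2) * R ^ (2 * m + 3) ≤ V * (2 * t ^ 2) ^ (m + 1))
    (x : E n) (hx1 : t ≤ ‖x - x0‖) (hx2 : ‖x - x0‖ ≤ R) :
    V * (2 * t ^ 2) ^ (m + 1) * (((‖x - x0‖ ^ 2 + t ^ 2)⁻¹) ^ (m + 1) - ((R ^ 2 + t ^ 2)⁻¹) ^ (m + 1))
      ≤ v x := by
  have hR : 0 < R := by linarith
  have ha : 0 < t ^ 2 := by positivity
  obtain ⟨A, hAd⟩ : ∃ A, A = V * (2 * t ^ 2) ^ (m + 1) := ⟨_, rfl⟩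
  rw [← hAd] at hA ⊢
  have hApos : 0 < A := lt_of_lt_of_le (by positivity) hA
  obtain ⟨w, hw⟩ : ∃ w : E n → ℝ, w = fun x : E n => ((‖x - x0‖ ^ 2 + t ^ 2)⁻¹) ^ (m + 1) := ⟨_, rfl⟩
  have hwc : ContDiff ℝ 2 w := hw ▸ hs_bar_contDiff x0 ha m
  have hwx : ∀ x, ((‖x - x0‖ ^ 2 + t ^ 2)⁻¹) ^ (m + 1) = w x := fun x => by rw [hw]
  obtain ⟨c, hc⟩ : ∃ c, c = ((R ^ 2 + t ^ 2)⁻¹) ^ (m + 1) := ⟨_, rfl⟩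
  have hcpos : 0 < c := by rw [hc]; positivity
  rw [hwx, ← hc]
  let S : Set (E n) := {x | t ≤ ‖x - x0‖} ∩ closedBall x0 R
  have hScl : IsClosed {x : E n | t ≤ ‖x - x0‖} := isClosed_le continuous_const (by fun_prop)
  have hS : IsCompact S := (isCompact_closedBall x0 R).inter_left hScl
  have hwcont := hwc.continuous
  have hxS : x ∈ S := ⟨hx1, by rwa [mem_closedBall, dist_eq_norm]⟩
  obtain ⟨p, hp, hmax⟩ := hS.exists_isMaxOn ⟨x, hxS⟩
    (f := fun x => A * (w x - c) - v x) (by fun_prop)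
  have h1 : A * (w x - c) - v x ≤ A * (w p - c) - v p := hmax hxS
  suffices h : A * (w p - c) - v p ≤ 0 by linarith
  obtain ⟨hp1, hp2⟩ := hp
  have hp1 : t ≤ ‖p - x0‖ := hp1
  have hp2' : ‖p - x0‖ ≤ R := by rwa [mem_closedBall, dist_eq_norm] at hp2
  rcases hp1.eq_or_lt with hpt | hpt
  · have e1 : A * w p = V := by
      rw [hAd, ← hwx, ← hpt, mul_assoc, ← mul_pow]
      have : 2 * t ^ 2 * (t ^ 2 + t ^ 2)⁻¹ = 1 := by field_simp; norm_num
      rw [this]; simp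
    have := hin p hpt.symm.le
    nlinarith
  rcases hp2'.eq_or_lt with hpR | hpR
  · have e1 : w p = c := by rw [← hwx, hpR, hc]
    rw [e1]
    have := h0 p hp2
    linarith
  exfalso
  have hpne : p ≠ x0 := by
    rintro rfl
    simp at hpt; linarith
  have hzpos : 0 < ‖p - x0‖ := by linarith
  have htz : t ^ 2 ≤ ‖p - x0‖ ^ 2 := by gcongr
  have hlap := hs_bar_lap x0 ha m hm p htz
  have hgrad := hs_bar_grad x0 ha m p hpne
  rw [← hw] at hlap hgrad
  obtain ⟨z, hz⟩ : ∃ z, z = ‖p - x0‖ := ⟨_, rfl⟩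
  rw [← hz] at hp1 hp2' hpt hpR hzpos htz hlap hgrad
  obtain ⟨Q, hQ⟩ : ∃ Q, Q = (z ^ 2 + t ^ 2)⁻¹ := ⟨_, rfl⟩
  rw [← hQ] at hlap hgrad
  have hQpos : 0 < Q := by rw [hQ]; positivity
  have hQ2 : 1 ≤ Q * (2 * z ^ 2) := by
    have : Q * (z ^ 2 + t ^ 2) = 1 := by rw [hQ]; apply inv_mul_cancel₀; positivity
    nlinarith
  have hkey : 1 ≤ A * (z * Q ^ (m + 2)) := by
    have h1 : 1 ≤ (Q * (2 * z ^ 2)) ^ (m + 2) := one_le_pow₀ hQ2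
    have h2 : (Q * (2 * z ^ 2)) ^ (m + 2) = 2 ^ (m + 2) * z ^ (2 * m + 3) * (z * Q ^ (m + 2)) := by
      rw [mul_pow, mul_pow, ← pow_mul]; ring
    have h3 : 2 ^ (m + 2) * z ^ (2 * m + 3) ≤ A := by
      refine le_trans ?_ hA
      gcongr
    rw [h2] at h1
    refine h1.trans ?_
    gcongr
  have hkey2 : 1 ≤ A * Q ^ (m + 2) := by
    refine hkey.trans ?_
    have : z * Q ^ (m + 2) ≤ 1 * Q ^ (m + 2) := by gcongr; linarith
    rw [one_mul] at this
    gcongr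
  have hφc : ContDiff ℝ 2 (fun x => -(A * w x)) := (contDiff_const.mul hwc).neg
  have := hs (fun x => -(A * w x) + (A * w p - v p)) (hφc.add contDiff_const) p
    (by rw [mem_ball, dist_eq_norm, ← hz]; exact hpR) ⟨by ring, ?_⟩ ?_
  · rw [hs_lap_add hφc contDiff_const, hs_lap_const, hs_lap_neg, hs_lap_smul hwc] at this
    nlinarith
  · have o1 : IsOpen {x : E n | t < ‖x - x0‖} := isOpen_lt continuous_const (by fun_prop)
    filter_upwards [o1.mem_nhds (show p ∈ {x : E n | t < ‖x - x0‖} by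
      show t < ‖p - x0‖; rw [← hz]; exact hpt), isOpen_ball.mem_nhds (show p ∈ ball x0 R by
      rw [mem_ball, dist_eq_norm, ← hz]; exact hpR)] with y hy1 hy2
    have : A * (w y - c) - v y ≤ A * (w p - c) - v p :=
      hmax ⟨le_of_lt hy1, ball_subset_closedBall hy2⟩
    linarith
  · rw [hs_norm_grad]
    have hd : DifferentiableAt ℝ w p := hwc.differentiable (by norm_num) p
    have e : fderiv ℝ (fun x => -(A * w x) + (A * w p - v p)) p = -(A • fderiv ℝ w p) := by
      have := ((hd.hasFDerivAt.const_mul A).neg.add_const (A * w p - v p)).fderiv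
      exact this
    rw [e, norm_neg, norm_smul, Real.norm_eq_abs, abs_of_pos hApos]
    nlinarith

theorem HsSub.hs_mono {n : ℕ} {Ω Ω' : Set (E n)} {u : E n → ℝ} (h : HsSub Ω u) (hs : Ω' ⊆ Ω) :
    HsSub Ω' u := fun φ hφ x hx ht hg => h φ hφ x (hs hx) ht hg

theorem hs_loc_aux {m : ℕ} {d t θ ρ V W z : ℝ} (hθ : 0 < θ) (hd : 0 < d) (hdρ : d ≤ ρ)
    (ht : t = θ * d) (hθ1 : θ ≤ 1) (hz0 : 0 ≤ z) (hz : z ≤ ρ) (hV : 0 ≤ V)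
    (h : V / 2 * (2 * t ^ 2) ^ (m + 1) * (((z ^ 2 + t ^ 2)⁻¹) ^ (m + 1)
      - (((2 * ρ) ^ 2 + t ^ 2)⁻¹) ^ (m + 1)) ≤ W) :
    V * d ^ (2 * (m + 1)) * θ ^ (2 * (m + 1)) ≤ 4 ^ (m + 1) * ρ ^ (2 * (m + 1)) * W := by
  have hρ : 0 < ρ := by linarith
  have htpos : 0 < t := by rw [ht]; positivity
  have htρ : t ≤ ρ := by rw [ht]; nlinarith
  have h1 : 2 * (4 * ρ ^ 2)⁻¹ ≤ (z ^ 2 + t ^ 2)⁻¹ := by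
    have : 2 * (4 * ρ ^ 2)⁻¹ = (2 * ρ ^ 2)⁻¹ := by field_simp; norm_num
    rw [this]
    apply inv_anti₀ (by positivity)
    have : z ^ 2 ≤ ρ ^ 2 := by gcongr
    have : t ^ 2 ≤ ρ ^ 2 := by gcongr
    linarith
  have h2 : ((2 * ρ) ^ 2 + t ^ 2)⁻¹ ≤ (4 * ρ ^ 2)⁻¹ := by
    apply inv_anti₀ (by positivity)
    nlinarith
  obtain ⟨Y, hY⟩ : ∃ Y, Y = (4 * ρ ^ 2)⁻¹ := ⟨_, rfl⟩
  have hYpos : 0 < Y := by rw [hY]; positivity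
  rw [← hY] at h1 h2
  have h3 : (2 * Y) ^ (m + 1) ≤ ((z ^ 2 + t ^ 2)⁻¹) ^ (m + 1) := by gcongr
  have h4 : (((2 * ρ) ^ 2 + t ^ 2)⁻¹) ^ (m + 1) ≤ Y ^ (m + 1) := by gcongr
  have h2m : (1:ℝ) ≤ 2 ^ m := one_le_pow₀ (by norm_num)
  have h5 : Y ^ (m + 1) ≤ ((z ^ 2 + t ^ 2)⁻¹) ^ (m + 1) - (((2 * ρ) ^ 2 + t ^ 2)⁻¹) ^ (m + 1) := by
    have : 2 * Y ^ (m + 1) ≤ (2 * Y) ^ (m + 1) := by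
      rw [mul_pow, pow_succ 2 m]
      have : 0 < Y ^ (m + 1) := by positivity
      nlinarith
    linarith
  have h6 : V / 2 * (2 * t ^ 2) ^ (m + 1) * Y ^ (m + 1) ≤ W := le_trans (by gcongr) h
  have h7 : Y ^ (m + 1) * (4 ^ (m + 1) * ρ ^ (2 * (m + 1))) = 1 := by
    rw [pow_mul, ← mul_pow, ← mul_pow, hY, inv_mul_cancel₀ (by positivity), one_pow]
  have h8 : V / 2 * (2 * t ^ 2) ^ (m + 1) ≤ W * (4 ^ (m + 1) * ρ ^ (2 * (m + 1))) := by
    calc V / 2 * (2 * t ^ 2) ^ (m + 1)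
        = V / 2 * (2 * t ^ 2) ^ (m + 1) * Y ^ (m + 1) * (4 ^ (m + 1) * ρ ^ (2 * (m + 1))) := by
          rw [mul_assoc _ (Y ^ (m + 1)), h7, mul_one]
      _ ≤ _ := by gcongr
  have h9 : V / 2 * (2 * t ^ 2) ^ (m + 1) = 2 ^ m * (V * d ^ (2 * (m + 1)) * θ ^ (2 * (m + 1))) := by
    rw [ht, mul_pow θ d 2, mul_pow, mul_pow, pow_mul, pow_mul, pow_succ 2 m]; ring
  have h10 : 0 ≤ V * d ^ (2 * (m + 1)) * θ ^ (2 * (m + 1)) := by positivity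
  nlinarith

theorem hs_loc_aux2 {m : ℕ} {d t θ ρ V : ℝ} (hθ : 0 < θ) (hd : 0 < d)
    (ht : t = θ * d) (hV : 0 ≤ V)
    (h : V / 2 * (2 * t ^ 2) ^ (m + 1) ≤ 2 ^ (m + 2) * (2 * ρ) ^ (2 * m + 3)) :
    V * d ^ (2 * (m + 1)) * θ ^ (2 * (m + 1)) ≤ 8 * 4 ^ (m + 1) * ρ ^ (2 * (m + 1)) * ρ := by
  have h9 : V / 2 * (2 * t ^ 2) ^ (m + 1) = 2 ^ m * (V * d ^ (2 * (m + 1)) * θ ^ (2 * (m + 1))) := by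
    rw [ht, mul_pow θ d 2, mul_pow, mul_pow, pow_mul, pow_mul, pow_succ 2 m]; ring
  have h10 : (2:ℝ) ^ (m + 2) * (2 * ρ) ^ (2 * m + 3) =
      2 ^ m * (8 * 4 ^ (m + 1) * ρ ^ (2 * (m + 1)) * ρ) := by
    have : (4:ℝ) ^ (m + 1) = 2 ^ (2 * (m + 1)) := by rw [pow_mul]; norm_num
    rw [mul_pow, this]; ring
  rw [h9, h10] at h
  exact le_of_mul_le_mul_left h (by positivity)

theorem hs_loc {n : ℕ} (m : ℕ) (hm : n = m + 1) {θ : ℝ} (hθ : 0 < θ) (hθ8 : θ ≤ 1 / 8)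
    (hθn : (2 * n + 22) * 4 ^ (m + 1) * 4 * θ ≤ 1) {y : E n} {ρ : ℝ} {v : E n → ℝ}
    (hρ : 0 < ρ) (hρ1 : 2 * ρ ≤ 1) (hv : Continuous v) (h0 : ∀ x ∈ closedBall y (3 * ρ), 0 ≤ v x)
    (hs1 : HsSub (ball y (3 * ρ)) v) (hs2 : HsSub (ball y (3 * ρ)) (fun x => - v x))
    (x : E n) (hx : ‖x - y‖ ≤ ρ / 2) :
    v x * θ ^ (2 * (m + 1)) ≤ 4 ^ (m + 1) * (8 * 4 ^ (m + 1)) * (v y + ρ) := by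
  have hn : 0 < n := by omega
  have hyy : 0 ≤ v y := h0 y (mem_closedBall_self (by linarith))
  have hgc : Continuous (fun x : E n => v x * (ρ - ‖x - y‖) ^ (2 * (m + 1))) := by fun_prop
  have hxB : x ∈ closedBall y ρ := by rw [mem_closedBall, dist_eq_norm]; linarith
  obtain ⟨x0, hx0, hmax⟩ := (isCompact_closedBall y ρ).exists_isMaxOn ⟨x, hxB⟩ hgc.continuousOn
  have hmax : ∀ z, ‖z - y‖ ≤ ρ → v z * (ρ - ‖z - y‖) ^ (2 * (m + 1)) ≤
      v x0 * (ρ - ‖x0 - y‖) ^ (2 * (m + 1)) := fun z hz =>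
    hmax (show z ∈ closedBall y ρ by rwa [mem_closedBall, dist_eq_norm])
  rw [mem_closedBall, dist_eq_norm] at hx0
  have h0' : ∀ z, ‖z - y‖ ≤ 3 * ρ → 0 ≤ v z := fun z hz => h0 z (by rwa [mem_closedBall, dist_eq_norm])
  obtain ⟨d, hd⟩ : ∃ d, d = ρ - ‖x0 - y‖ := ⟨_, rfl⟩
  rw [← hd] at hmax
  have hd0 : 0 ≤ d := by linarith
  have hdρ : d ≤ ρ := by linarith [norm_nonneg (x0 - y)]
  have hVx0 : 0 ≤ v x0 := h0' x0 (by linarith)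
  have hθ1 : θ ^ (2 * (m + 1)) ≤ 1 := pow_le_one₀ hθ.le (by linarith)
  have hθp : 0 < θ ^ (2 * (m + 1)) := by positivity
  have h4 : (1:ℝ) ≤ 4 ^ (m + 1) := one_le_pow₀ (by norm_num)
  have hdpow : d ^ (2 * (m + 1)) ≤ ρ ^ (2 * (m + 1)) := by gcongr
  have hρp : 0 < ρ ^ (2 * (m + 1)) := by positivity
  have hdp : 0 ≤ d ^ (2 * (m + 1)) := by positivity
  -- main claim
  have main : v x0 * d ^ (2 * (m + 1)) * θ ^ (2 * (m + 1)) ≤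
      8 * 4 ^ (m + 1) * ρ ^ (2 * (m + 1)) * (v y + ρ) := by
    have hfin : ∀ W, 0 ≤ W → W ≤ 2 * (v y + ρ) → v x0 ≤ W →
        v x0 * d ^ (2 * (m + 1)) * θ ^ (2 * (m + 1)) ≤
          8 * 4 ^ (m + 1) * ρ ^ (2 * (m + 1)) * (v y + ρ) := by
      intro W hW0 hW hV
      calc v x0 * d ^ (2 * (m + 1)) * θ ^ (2 * (m + 1)) ≤ W * ρ ^ (2 * (m + 1)) * 1 := by gcongr
        _ ≤ (2 * (v y + ρ)) * ρ ^ (2 * (m + 1)) * 1 := by gcongr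
        _ = 2 * 1 * ρ ^ (2 * (m + 1)) * (v y + ρ) := by ring
        _ ≤ 8 * 4 ^ (m + 1) * ρ ^ (2 * (m + 1)) * (v y + ρ) := by gcongr; norm_num
    by_cases hVd : v x0 ≤ d
    · exact hfin d hd0 (by linarith) hVd
    push Not at hVd
    rcases hd0.eq_or_lt with hd00 | hdpos
    · rw [← hd00, zero_pow (by omega), mul_zero, zero_mul]; positivity
    obtain ⟨t, ht⟩ : ∃ t, t = θ * d := ⟨_, rfl⟩
    have htpos : 0 < t := by rw [ht]; positivity
    have ht8 : t ≤ d / 8 := by rw [ht]; nlinarith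
    have hin : ∀ z, ‖z - x0‖ ≤ t → v x0 / 2 ≤ v z := by
      intro z hz
      have hlip := hs_lip hn (c := x0) (r := d / 2) (M := 4 ^ (m + 1) * v x0) (by linarith)
        (by linarith) (by nlinarith) hv ?_ ?_ ?_ z (by rw [norm_sub_rev]; linarith)
      · have e : (2 * (n:ℝ) + 22) * (4 ^ (m + 1) * v x0 / (d / 2)) * ‖x0 - z‖ ≤
          (2 * (n:ℝ) + 22) * (4 ^ (m + 1) * v x0 / (d / 2)) * (θ * d) := by
          rw [norm_sub_rev, ← ht]; gcongr
        have e2 : (2 * (n:ℝ) + 22) * (4 ^ (m + 1) * v x0 / (d / 2)) * (θ * d) =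
          ((2 * n + 22) * 4 ^ (m + 1) * 4 * θ) * (v x0 / 2) := by field_simp; ring
        have e3 : ((2 * n + 22) * 4 ^ (m + 1) * 4 * θ) * (v x0 / 2) ≤ 1 * (v x0 / 2) := by gcongr
        linarith
      · intro p hp
        rw [mem_closedBall, dist_eq_norm] at hp
        have hpy : ‖p - y‖ ≤ ρ - d / 2 := by
          have : p - y = (p - x0) + (x0 - y) := by abel
          rw [this]
          linarith [norm_add_le (p - x0) (x0 - y)]
        have hp0 := h0' p (by linarith)
        refine ⟨hp0, ?_⟩
        have h1 := hmax p (by linarith)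
        have h2 : (d / 2) ^ (2 * (m + 1)) ≤ (ρ - ‖p - y‖) ^ (2 * (m + 1)) := by gcongr; linarith
        have h3 : v p * (d / 2) ^ (2 * (m + 1)) ≤ v x0 * d ^ (2 * (m + 1)) :=
          le_trans (by gcongr) h1
        have h4 : d ^ (2 * (m + 1)) = 4 ^ (m + 1) * (d / 2) ^ (2 * (m + 1)) := by
          rw [pow_mul, pow_mul, ← mul_pow]; congr 1; ring
        rw [h4] at h3
        have h5 : 0 < (d / 2) ^ (2 * (m + 1)) := by positivity
        refine le_of_mul_le_mul_right ?_ h5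
        linarith
      · refine hs1.hs_mono (ball_subset_ball' ?_)
        rw [dist_eq_norm]; linarith
      · refine hs2.hs_mono (ball_subset_ball' ?_)
        rw [dist_eq_norm]; linarith
    by_cases hyt : ‖y - x0‖ ≤ t
    · have := hin y hyt
      exact hfin (2 * v y) (by linarith) (by linarith) (by linarith)
    push Not at hyt
    have hyx : ‖y - x0‖ ≤ ρ := by rw [norm_sub_rev]; linarith
    by_cases hA : 2 ^ (m + 2) * (2 * ρ) ^ (2 * m + 3) ≤ v x0 / 2 * (2 * t ^ 2) ^ (m + 1)
    · have hb := hs_barrier m hm.le (x0 := x0) (R := 2 * ρ) htpos hρ1 hv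
        (hs2.hs_mono (ball_subset_ball' (by rw [dist_eq_norm]; linarith)))
        (fun z hz => h0 z (closedBall_subset_closedBall' (by rw [dist_eq_norm]; linarith) hz))
        hin hA y hyt.le (by linarith)
      have := hs_loc_aux hθ hdpos hdρ ht (by linarith) (norm_nonneg _) hyx hVx0 hb
      have e1 : 4 ^ (m + 1) * ρ ^ (2 * (m + 1)) * v y ≤ 8 * 4 ^ (m + 1) * ρ ^ (2 * (m + 1)) * (v y + ρ) := by
        gcongr <;> linarith
      linarith
    · push Not at hA
      have := hs_loc_aux2 hθ hdpos ht hVx0 hA.le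
      have e1 : 8 * 4 ^ (m + 1) * ρ ^ (2 * (m + 1)) * ρ ≤ 8 * 4 ^ (m + 1) * ρ ^ (2 * (m + 1)) * (v y + ρ) := by
        gcongr; linarith
      linarith
  have hx1 := hmax x (by linarith)
  have hx0 := h0' x (by linarith)
  have h2 : (ρ / 2) ^ (2 * (m + 1)) ≤ (ρ - ‖x - y‖) ^ (2 * (m + 1)) := by gcongr; linarith
  have h3 : v x * (ρ / 2) ^ (2 * (m + 1)) ≤ v x0 * d ^ (2 * (m + 1)) :=
    le_trans (by gcongr) hx1
  have h5 : ρ ^ (2 * (m + 1)) = 4 ^ (m + 1) * (ρ / 2) ^ (2 * (m + 1)) := by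
    rw [pow_mul, pow_mul, ← mul_pow]; congr 1; ring
  have h6 : 0 < (ρ / 2) ^ (2 * (m + 1)) := by positivity
  refine le_of_mul_le_mul_right ?_ h6
  calc v x * θ ^ (2 * (m + 1)) * (ρ / 2) ^ (2 * (m + 1))
      = v x * (ρ / 2) ^ (2 * (m + 1)) * θ ^ (2 * (m + 1)) := by ring
    _ ≤ v x0 * d ^ (2 * (m + 1)) * θ ^ (2 * (m + 1)) := by gcongr
    _ ≤ 8 * 4 ^ (m + 1) * ρ ^ (2 * (m + 1)) * (v y + ρ) := main
    _ = _ := by rw [h5]; ring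

theorem hs_gradient_neg {n : ℕ} (φ : E n → ℝ) (x : E n) :
    gradient (fun x => - φ x) x = - gradient φ x := by
  simp only [gradient]
  rw [fderiv_fun_neg, map_neg]

theorem hs_one_le_pow {n : ℕ} {μ : ℝ} (hμ : 0 ≤ μ) {g e : E n} (he : ‖e‖ = 1) (hg : 2 ≤ ‖g‖) :
    1 ≤ ‖g + e‖ ^ μ := by
  apply Real.one_le_rpow _ hμ
  have := norm_sub_le (g + e) e
  rw [add_sub_cancel_right, he] at this
  linarith

theorem hs_visc_sub {n : ℕ} {μ : ℝ} (hμ : 0 ≤ μ) {e : E n} (he : ‖e‖ = 1) {U : Set (E n)}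
    {f v : E n → ℝ} (hf : ∀ x ∈ U, |f x| ≤ 1) (h : ViscSolShift μ e U f v) : HsSub U v := by
  intro φ hφ x hx ht hg
  have h1 := (h φ hφ x hx).2 ht
  have h2 := hs_one_le_pow hμ he hg
  have h3 := (abs_le.1 (hf x hx)).1
  by_contra hcon
  push Not at hcon
  nlinarith

theorem hs_visc_super {n : ℕ} {μ : ℝ} (hμ : 0 ≤ μ) {e : E n} (he : ‖e‖ = 1) {U : Set (E n)}
    {f v : E n → ℝ} (hf : ∀ x ∈ U, |f x| ≤ 1) (h : ViscSolShift μ e U f v) :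
    HsSub U (fun x => - v x) := by
  intro φ hφ x hx ht hg
  have h1 := (h (fun x => - φ x) hφ.neg x hx).1 ⟨by have := ht.1; linarith, by
    filter_upwards [ht.2] with y hy
    linarith⟩
  have h2 := hs_one_le_pow (g := gradient (fun x => - φ x) x) hμ he
    (by rw [hs_gradient_neg, norm_neg]; exact hg)
  have h3 := (abs_le.1 (hf x hx)).2
  rw [hs_lap_neg] at h1
  by_contra hcon
  push Not at hcon
  nlinarith

theorem HsSub.hs_congr {n : ℕ} {Ω : Set (E n)} (hΩ : IsOpen Ω) {u w : E n → ℝ}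
    (huw : ∀ x ∈ Ω, u x = w x) (h : HsSub Ω u) : HsSub Ω w := by
  intro φ hφ x hx ht hg
  refine h φ hφ x hx ⟨by rw [huw x hx]; exact ht.1, ?_⟩ hg
  filter_upwards [ht.2, hΩ.mem_nhds hx] with y hy hyΩ
  rw [huw y hyΩ]; exact hy

theorem hs_harnack {n : ℕ} (hn : 0 < n) : ∃ C : ℝ, 1 ≤ C ∧ ∀ (δ : ℝ) (v : E n → ℝ), 0 < δ → δ < 1 →
    ContinuousOn v (ball (0 : E n) δ) → (∀ x ∈ ball (0 : E n) δ, 0 ≤ v x) →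
    HsSub (ball 0 δ) v → HsSub (ball 0 δ) (fun x => - v x) →
    ∀ y ∈ ball (0 : E n) (δ / 2), ∀ x, ‖x - y‖ ≤ δ / 12 → v x ≤ C * (v y + δ) := by
  obtain ⟨m, hm⟩ : ∃ m, n = m + 1 := ⟨n - 1, by omega⟩
  obtain ⟨D, hD⟩ : ∃ D : ℝ, D = (2 * n + 22) * 4 ^ (m + 1) * 4 := ⟨_, rfl⟩
  have h4 : (1:ℝ) ≤ 4 ^ (m + 1) := one_le_pow₀ (by norm_num)
  have hDpos : 8 ≤ D := by
    rw [hD]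
    have : (0:ℝ) ≤ n := Nat.cast_nonneg n
    nlinarith
  have hθ : 0 < 1 / D := by positivity
  have hθ8 : 1 / D ≤ 1 / 8 := one_div_le_one_div_of_le (by norm_num) hDpos
  have hp : 0 < (1 / D) ^ (2 * (m + 1)) := by positivity
  refine ⟨4 ^ (m + 1) * (8 * 4 ^ (m + 1)) / (1 / D) ^ (2 * (m + 1)), ?_, ?_⟩
  · rw [le_div_iff₀ hp, one_mul]
    have : (1 / D) ^ (2 * (m + 1)) ≤ 1 := pow_le_one₀ hθ.le (by linarith)
    nlinarith
  intro δ v hδ hδ1 hv h0 hs1 hs2 y hy x hx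
  have hy' : ‖y‖ < δ / 2 := by simpa using hy
  have hsub : closedBall y (3 * (δ / 6)) ⊆ ball (0 : E n) δ := by
    intro z hz
    rw [mem_closedBall, dist_eq_norm] at hz
    rw [mem_ball_zero_iff]
    have : z = (z - y) + y := by abel
    rw [this]
    linarith [norm_add_le (z - y) y]
  have hcl : IsClosed (closedBall y (3 * (δ / 6))) := isClosed_closedBall
  obtain ⟨g, hg⟩ := ContinuousMap.exists_restrict_eq hcl
    (⟨(closedBall y (3 * (δ / 6))).domRestrict v, (hv.mono hsub).domRestrict⟩ : C(closedBall y (3 * (δ / 6)), ℝ))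
  have hgv : ∀ z ∈ closedBall y (3 * (δ / 6)), v z = g z := by
    intro z hz
    have := congrArg (fun F => F ⟨z, hz⟩) hg
    exact this.symm
  have hgvb : ∀ z ∈ ball y (3 * (δ / 6)), v z = g z := fun z hz => hgv z (ball_subset_closedBall hz)
  have key := hs_loc m hm hθ hθ8 (by rw [← hD]; field_simp; rfl) (y := y) (ρ := δ / 6) (v := g)
    (by linarith) (by linarith) g.continuous
    (fun z hz => by rw [← hgv z hz]; exact h0 z (hsub hz))
    ((hs1.hs_mono (ball_subset_closedBall.trans hsub)).hs_congr isOpen_ball hgvb)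
    ((hs2.hs_mono (ball_subset_closedBall.trans hsub)).hs_congr isOpen_ball
      (fun z hz => by rw [hgvb z hz])) x (by linarith)
  rw [← hgv x (by rw [mem_closedBall, dist_eq_norm]; linarith),
    ← hgv y (mem_closedBall_self (by linarith))] at key
  rw [div_mul_eq_mul_div, le_div_iff₀ hp]
  refine key.trans ?_
  gcongr
  linarith

theorem harnack_shifted (n : ℕ) (μ : ℝ) (hμ : 0 ≤ μ) :
    ∃ C : ℝ, 0 < C ∧
      ∀ (δ : ℝ) (e : E n) (f v : E n → ℝ),
        0 < δ → δ < 1 → ‖e‖ = 1 →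
        ContinuousOn f (ball (0 : E n) δ) →
        (∀ x ∈ ball (0 : E n) δ, |f x| ≤ 1) →
        ContinuousOn v (ball (0 : E n) δ) →
        (∀ x ∈ ball (0 : E n) δ, 0 ≤ v x) →
        ViscSolShift μ e (ball 0 δ) f v →
        ∀ x ∈ ball (0 : E n) (δ / 2), ∀ y ∈ ball (0 : E n) (δ / 2),
          v x ≤ C * (v y + 2 * δ) := by
  rcases Nat.eq_zero_or_pos n with h0 | hn
  · subst h0
    refine ⟨1, one_pos, ?_⟩
    intro δ e f v _ _ he
    rw [Subsingleton.elim e 0, norm_zero] at he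
    norm_num at he
  obtain ⟨C, hC1, hC⟩ := hs_harnack hn
  refine ⟨(2 * C) ^ 12, by positivity, ?_⟩
  intro δ e f v hδ hδ1 he _ hf hv hv0 hvs x hx y hy
  have H := hC δ v hδ hδ1 hv hv0 (hs_visc_sub hμ he hf hvs) (hs_visc_super hμ he hf hvs)
  have hx' : ‖x‖ < δ / 2 := by simpa using hx
  have hy' : ‖y‖ < δ / 2 := by simpa using hy
  have hxy : ‖x - y‖ ≤ δ := by linarith [norm_sub_le x y]
  have hmem : ∀ i : ℕ, i ≤ 12 → y + ((i:ℝ) / 12) • (x - y) ∈ ball (0 : E n) (δ / 2) := by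
    intro i hi
    have hi' : (i:ℝ) ≤ 12 := by exact_mod_cast hi
    exact (convex_ball (0 : E n) (δ / 2)).add_smul_sub_mem hy hx
      ⟨by positivity, by rw [div_le_one (by norm_num)]; exact hi'⟩
  have hyv : 0 ≤ v y := hv0 y (ball_subset_ball (by linarith) hy)
  have ind : ∀ i : ℕ, i ≤ 12 →
      v (y + ((i:ℝ) / 12) • (x - y)) + δ ≤ (2 * C) ^ i * (v y + δ) := by
    intro i
    induction i with
    | zero => intro _; simp
    | succ i ih =>
      intro hi
      have h1 := ih (by omega)
      have hm1 := hmem i (by omega)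
      have hnn := hv0 _ (ball_subset_ball (by linarith) hm1)
      have h2 := H _ hm1 (y + (((i + 1 : ℕ):ℝ) / 12) • (x - y)) (by
        have : y + (((i + 1 : ℕ):ℝ) / 12) • (x - y) - (y + ((i:ℝ) / 12) • (x - y)) =
          (1 / 12 : ℝ) • (x - y) := by push_cast; module
        rw [this, norm_smul]
        norm_num
        linarith)
      have h3 : v (y + (((i + 1 : ℕ):ℝ) / 12) • (x - y)) + δ ≤
          2 * C * (v (y + ((i:ℝ) / 12) • (x - y)) + δ) := by nlinarith
      calc _ ≤ _ := h3
        _ ≤ 2 * C * ((2 * C) ^ i * (v y + δ)) := by gcongr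
        _ = _ := by ring
  have h12 := ind 12 le_rfl
  have e1 : y + (((12:ℕ):ℝ) / 12) • (x - y) = x := by norm_num
  rw [e1] at h12
  have : (2 * C) ^ 12 * (v y + δ) ≤ (2 * C) ^ 12 * (v y + 2 * δ) := by gcongr; linarith
  linarith
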